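/- Let μ be a non-atomic self-conformal measure on ℝ^d associated to a self-conformal IFS Φ = {φ_a}_{a∈A} and a strictly positive probability vector (p_a)_{a∈A}. Then there exist a probability space (Ω, 𝒜, ℙ) and a family (μ_ω)_{ω∈Ω} of Borel probability measures on ℝ^d forming a disintegration of μ, and constants C₁, C₂, α > 0, such that: (i) μ(E) = ∫_Ω μ_ω(E) dℙ(ω) for every Borel set E ⊆ ℝ^d; (ii) for every ω ∈ Ω, every x in the support of μ_ω and every r > 0, μ_ω(B(x,2r)) ≤ C₁ μ_ω(B(x,r)); (iii) for every ω ∈ Ω, every x in the support of μ_ω, every y ∈ ℝ^d, every r with 0 < r ≤ 1 and every ε > 0, μ_ω(B(y, εr) ∩ B(x,r)) ≤ C₂ ε^α μ_ω(B(x,r)). -/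

import Mathlib

noncomputable section
open MeasureTheory Metric Filter Topology

variable {E : Type*} [NormedAddCommGroup E] [NormedSpace ℝ E]

/-- `f` is a contraction with ratio `r ∈ (0,1)`. -/
def IsContractionWith (r : ℝ) (f : E → E) : Prop :=
  0 < r ∧ r < 1 ∧ ∀ x y, ‖f x - f y‖ ≤ r * ‖x - y‖

/-- `f` is a contracting similarity with ratio `r ∈ (0,1)`. -/
def IsSimilarityWith (r : ℝ) (f : E → E) : Prop :=
  0 < r ∧ r < 1 ∧ ∀ x y, ‖f x - f y‖ = r * ‖x - y‖

/-- A self-conformal IFS. -/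
def IsSelfConformalIFS {A : Type*} [Fintype A] (φ : A → E → E) : Prop :=
  2 ≤ Fintype.card A ∧
  (∀ a, ∃ r, IsContractionWith r (φ a)) ∧
  (∀ a, ContDiff ℝ 1 (φ a)) ∧
  (∀ a x, 0 < ‖fderiv ℝ (φ a) x‖ ∧ ∀ v, ‖fderiv ℝ (φ a) x v‖ = ‖fderiv ℝ (φ a) x‖ * ‖v‖) ∧
  (∃ H α₀ : ℝ, 0 < H ∧ 0 < α₀ ∧ ∀ a x y,
    |‖fderiv ℝ (φ a) x‖ - ‖fderiv ℝ (φ a) y‖| ≤ H * ‖x - y‖ ^ α₀) ∧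
  (∃ a₁ a₂ x₁ x₂, φ a₁ x₁ = x₁ ∧ φ a₂ x₂ = x₂ ∧ x₁ ≠ x₂)

/-- A self-similar IFS. -/
def IsSelfSimilarIFS {A : Type*} [Fintype A] (φ : A → E → E) : Prop :=
  2 ≤ Fintype.card A ∧
  (∀ a, ∃ r, IsSimilarityWith r (φ a)) ∧
  (∃ a₁ a₂ x₁ x₂, φ a₁ x₁ = x₁ ∧ φ a₂ x₂ = x₂ ∧ x₁ ≠ x₂)

/-- The IFS is affinely irreducible: no (nonempty) proper affine subspace is preserved. -/
def AffinelyIrreducible {A : Type*} (φ : A → E → E) : Prop :=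
  ¬ ∃ W : AffineSubspace ℝ E, (W : Set E).Nonempty ∧ W ≠ ⊤ ∧
      ∀ a, φ a '' (W : Set E) ⊆ (W : Set E)

/-- Closed `ε`-neighbourhood of an affine subspace. -/
def affNbhd (W : AffineSubspace ℝ E) (ε : ℝ) : Set E :=
  {y | Metric.infDist y (W : Set E) ≤ ε}

/-- topological support of a measure -/
def msupport [MeasurableSpace E] (μ : Measure E) : Set E :=
  {x | ∀ r : ℝ, 0 < r → 0 < μ (Metric.ball x r)}

/-- distance between two sets -/
def setDist (S T : Set E) : ℝ := sInf (Set.image2 dist S T)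

/-- map corresponding to a finite word (as a list) -/
def listMap {A : Type*} (φ : A → E → E) : List A → E → E
  | [] => id
  | a :: l => φ a ∘ listMap φ l

/-- map corresponding to the first `n` letters of an infinite word -/
def wordMap {A : Type*} (φ : A → E → E) : ℕ → (ℕ → A) → E → E
  | 0, _ => id
  | n + 1, a => φ (a 0) ∘ wordMap φ n (fun k => a (k + 1))

/-- set of `Ψ`-well-approximable vectors in `ℝ^d` -/
def WApprox (d : ℕ) (Ψ : ℕ → ℝ) : Set (EuclideanSpace ℝ (Fin d)) :=
  {x | {pq : (Fin d → ℤ) × ℕ | 0 < pq.2 ∧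
        ∀ i, |x i - (pq.1 i : ℝ) / (pq.2 : ℝ)| ≤ Ψ pq.2}.Infinite}

/-- set of singular vectors in `ℝ^d` -/
def Sing (d : ℕ) : Set (EuclideanSpace ℝ (Fin d)) :=
  {x | ∀ c : ℝ, 0 < c → ∃ T : ℝ, 0 < T ∧ ∀ t : ℝ, T ≤ t →
    ∃ q : ℕ, 0 < q ∧ (q : ℝ) < t ∧
      ∀ i, |(q : ℝ) * x i - round ((q : ℝ) * x i)| ≤ c * t ^ (-(1 : ℝ) / (d : ℝ))}

lemma conf_equiv {F : Type*} [NormedAddCommGroup F] [NormedSpace ℝ F] [FiniteDimensional ℝ F]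
    (T : F →L[ℝ] F) (hT : 0 < ‖T‖) (hc : ∀ v, ‖T v‖ = ‖T‖ * ‖v‖) :
    ∃ e : F ≃L[ℝ] F, (e : F →L[ℝ] F) = T ∧ ‖(e.symm : F →L[ℝ] F)‖ ≤ ‖T‖⁻¹ := by
  have hinj : Function.Injective T := by
    rw [injective_iff_map_eq_zero]
    intro v hv
    have := hc v
    rw [hv, norm_zero] at this
    have : ‖v‖ = 0 := by
      rcases mul_eq_zero.1 this.symm with h | h
      · exact absurd h hT.ne'
      · exact h
    exact norm_eq_zero.1 this
  let l : F ≃ₗ[ℝ] F := LinearEquiv.ofInjectiveEndo (T : F →ₗ[ℝ] F) hinj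
  let e : F ≃L[ℝ] F := l.toContinuousLinearEquiv
  have he : ∀ v, e v = T v := fun v => rfl
  refine ⟨e, ?_, ?_⟩
  · ext v; exact he v
  · refine ContinuousLinearMap.opNorm_le_bound _ (by positivity) fun v => ?_
    have h1 := hc (e.symm v)
    rw [← he, e.apply_symm_apply] at h1
    change ‖e.symm v‖ ≤ _
    rw [h1]
    field_simp
    exact le_refl _

lemma single_lower {F : Type*} [NormedAddCommGroup F] [NormedSpace ℝ F] [FiniteDimensional ℝ F]
    (g : F → F) (hg : ContDiff ℝ 1 g)
    (hconf : ∀ x, 0 < ‖fderiv ℝ g x‖ ∧ ∀ v, ‖fderiv ℝ g x v‖ = ‖fderiv ℝ g x‖ * ‖v‖)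
    (x y : F) (c m : ℝ) (hc0 : 0 ≤ c) (hc : c ≤ ‖fderiv ℝ g x‖ / 8)
    (hclose : ∀ z, ‖z - x‖ ≤ 2 * ‖x - y‖ → ‖fderiv ℝ g z - fderiv ℝ g x‖ ≤ c)
    (hm0 : 0 < m) (hm : ∀ z, ‖z - x‖ ≤ 2 * ‖x - y‖ → m ≤ ‖fderiv ℝ g z‖) :
    m * ‖x - y‖ ≤ ‖g x - g y‖ := by
  have : CompleteSpace F := FiniteDimensional.complete ℝ F
  rcases eq_or_ne x y with rfl | hxy
  · simp
  have : Nontrivial F := ⟨x, y, hxy⟩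
  have hτ : 0 < ‖x - y‖ := norm_pos_iff.2 (sub_ne_zero.2 hxy)
  have hdiff : Differentiable ℝ g := hg.differentiable (by norm_num)
  obtain ⟨e, he, hes⟩ := conf_equiv (fderiv ℝ g x) (hconf x).1 (hconf x).2
  set lam := ‖fderiv ℝ g x‖ with hlam
  have hlam0 : 0 < lam := (hconf x).1
  set s : Set F := ball x (2 * ‖x - y‖) with hs
  have hmem : ∀ z ∈ s, ‖z - x‖ ≤ 2 * ‖x - y‖ := fun z hz => by
    have := mem_ball.1 hz
    rw [dist_eq_norm] at this; exact this.le
  obtain ⟨c', hc'⟩ : ∃ c' : NNReal, (c' : ℝ) = c := ⟨⟨c, hc0⟩, rfl⟩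
  have happ : ApproximatesLinearOn g (e : F →L[ℝ] F) s c' := by
    rw [he]
    intro z hz w hw
    have := (convex_ball x (2 * ‖x - y‖)).norm_image_sub_le_of_norm_hasFDerivWithin_le'
      (f := g) (f' := fun z => fderiv ℝ g z) (φ := fderiv ℝ g x) (C := c)
      (fun z hz => (hdiff z).hasFDerivAt.hasFDerivWithinAt) (fun z hz => hclose z (hmem z hz)) hw hz
    rw [hc']; exact this
  have hN : 0 < ‖(e.symm : F →L[ℝ] F)‖ := e.norm_symm_pos
  have hNinv : lam ≤ ‖(e.symm : F →L[ℝ] F)‖⁻¹ := by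
    rw [le_inv_comm₀ hlam0 hN]; exact hes
  have hcN : c' < ‖(e.symm : F →L[ℝ] F)‖₊⁻¹ := by
    rw [← NNReal.coe_lt_coe]
    push_cast
    rw [hc']
    have : c < lam := by linarith
    exact this.trans_le hNinv
  let Φ := happ.toOpenPartialHomeomorph g s (Or.inr hcN) isOpen_ball
  have hΦ : (Φ : F → F) = g := rfl
  have hsrc : Φ.source = s := rfl
  have htgt : closedBall (g x) ((‖(e.symm : F →L[ℝ] F)‖⁻¹ - c) * (19/10 * ‖x - y‖)) ⊆ Φ.target := by
    have := happ.closedBall_subset_target (f := g) (s := s) (Or.inr hcN) isOpen_ball (b := x)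
      (ε := 19/10 * ‖x - y‖) (by positivity) (by
        apply closedBall_subset_ball; linarith)
    rw [← hc']; exact this
  have hys : y ∈ s := by rw [hs, mem_ball, dist_comm, dist_eq_norm]; linarith
  have hxs : x ∈ s := by rw [hs]; apply mem_ball_self; linarith
  have hgxy : ‖g y - g x‖ ≤ (lam + c) * ‖x - y‖ := by
    have h1 := happ y hys x hxs
    rw [hc'] at h1
    rw [he] at h1
    have h2 := (hconf x).2 (y - x)
    have h3 : ‖g y - g x‖ ≤ ‖g y - g x - fderiv ℝ g x (y - x)‖ + ‖fderiv ℝ g x (y - x)‖ := by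
      have := norm_add_le (g y - g x - fderiv ℝ g x (y - x)) (fderiv ℝ g x (y - x))
      simpa using this
    rw [h2] at h3
    rw [norm_sub_rev y x] at h1 h3
    linarith
  have hseg : segment ℝ (g x) (g y) ⊆ Φ.target := by
    refine (Convex.segment_subset (convex_closedBall _ _) (mem_closedBall_self ?_) ?_).trans htgt
    · have : 0 ≤ ‖(e.symm : F →L[ℝ] F)‖⁻¹ - c := by linarith
      positivity
    · rw [mem_closedBall, dist_eq_norm]
      refine hgxy.trans ?_
      have : lam + c ≤ (‖(e.symm : F →L[ℝ] F)‖⁻¹ - c) * (19/10) := by linarith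
      calc _ ≤ (‖(e.symm : F →L[ℝ] F)‖⁻¹ - c) * (19/10) * ‖x - y‖ := by gcongr
        _ = _ := by ring
  have hder : ∀ q ∈ segment ℝ (g x) (g y), ∃ D : F →L[ℝ] F, HasFDerivAt Φ.symm D q ∧ ‖D‖ ≤ m⁻¹ := by
    intro q hq
    have hqt := hseg hq
    have hqs : Φ.symm q ∈ s := Φ.map_target hqt
    obtain ⟨e', he', hes'⟩ := conf_equiv (fderiv ℝ g (Φ.symm q)) (hconf _).1 (hconf _).2
    refine ⟨e'.symm, ?_, ?_⟩
    · apply Φ.hasFDerivAt_symm hqt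
      rw [he']
      exact (hdiff _).hasFDerivAt
    · refine hes'.trans ?_
      have := hm _ (hmem _ hqs)
      gcongr
  choose! D hD1 hD2 using hder
  have := (convex_segment (𝕜 := ℝ) (g x) (g y)).norm_image_sub_le_of_norm_hasFDerivWithin_le
    (f := Φ.symm) (f' := D) (C := m⁻¹) (fun q hq => (hD1 q hq).hasFDerivWithinAt)
    (fun q hq => hD2 q hq) (right_mem_segment ℝ (g x) (g y)) (left_mem_segment ℝ (g x) (g y))
  have hx' : Φ.symm (g x) = x := Φ.left_inv (by rw [hsrc]; exact hxs)
  have hy' : Φ.symm (g y) = y := Φ.left_inv (by rw [hsrc]; exact hys)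
  rw [hx', hy', inv_mul_eq_div, le_div_iff₀ hm0] at this
  linarith

/-- The local geometric estimates satisfied by a single map. -/
lemma single_est {F : Type*} [NormedAddCommGroup F] [NormedSpace ℝ F] [FiniteDimensional ℝ F]
    (g : F → F) (hg : ContDiff ℝ 1 g)
    (hconf : ∀ x, 0 < ‖fderiv ℝ g x‖ ∧ ∀ v, ‖fderiv ℝ g x v‖ = ‖fderiv ℝ g x‖ * ‖v‖)
    (H α : ℝ) (hH : 0 < H) (hα : 0 < α)
    (hh : ∀ x y, |‖fderiv ℝ g x‖ - ‖fderiv ℝ g y‖| ≤ H * ‖x - y‖ ^ α) (R : ℝ) (hR : 0 < R) :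
    ∃ B η : ℝ, 0 < B ∧ 0 < η ∧
      (∀ x ∈ closedBall (0 : F) R, ∀ y ∈ closedBall (0 : F) R,
        ‖fderiv ℝ g y‖ ≤ ‖fderiv ℝ g x‖ * Real.exp (B * ‖x - y‖ ^ α)) ∧
      (∀ x ∈ closedBall (0 : F) R, ∀ y ∈ closedBall (0 : F) R,
        ‖g x - g y‖ ≤ ‖fderiv ℝ g x‖ * Real.exp (B * ‖x - y‖ ^ α) * ‖x - y‖) ∧
      (∀ x ∈ closedBall (0 : F) R, ∀ y ∈ closedBall (0 : F) R, ‖x - y‖ ≤ η →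
        ‖fderiv ℝ g x‖ * Real.exp (-(B * ‖x - y‖ ^ α)) * ‖x - y‖ ≤ ‖g x - g y‖) := by
  have hdiff : Differentiable ℝ g := hg.differentiable (by norm_num)
  have hcont : Continuous (fderiv ℝ g) := hg.continuous_fderiv (by norm_num)
  have : ProperSpace F := FiniteDimensional.proper ℝ F
  have hcomp : IsCompact (closedBall (0 : F) (R + 1)) := isCompact_closedBall _ _
  obtain ⟨x0, hx0, hmin⟩ := hcomp.exists_isMinOn ⟨0, by simp; linarith⟩ (hcont.norm.continuousOn)
  set lm := ‖fderiv ℝ g x0‖ with hlm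
  have hlm0 : 0 < lm := (hconf x0).1
  have hmin' : ∀ z ∈ closedBall (0 : F) (R + 1), lm ≤ ‖fderiv ℝ g z‖ := fun z hz => hmin hz
  have hlog : ∀ x ∈ closedBall (0 : F) (R + 1), ∀ y,
      ‖fderiv ℝ g y‖ ≤ ‖fderiv ℝ g x‖ * Real.exp (H / lm * ‖x - y‖ ^ α) := by
    intro x hx y
    have h1 := (abs_le.1 (hh x y)).1
    have h2 := hmin' x hx
    have h3 := Real.add_one_le_exp (H / lm * ‖x - y‖ ^ α)
    have hp : 0 ≤ ‖x - y‖ ^ α := by positivity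
    have h4 : H * ‖x - y‖ ^ α ≤ ‖fderiv ℝ g x‖ * (H / lm * ‖x - y‖ ^ α) := by
      have : H * ‖x - y‖ ^ α = lm * (H / lm * ‖x - y‖ ^ α) := by field_simp
      rw [this]; gcongr
    have h5 := mul_le_mul_of_nonneg_left h3 (norm_nonneg (fderiv ℝ g x))
    linarith
  have hsub : closedBall (0 : F) R ⊆ closedBall (0 : F) (R + 1) := closedBall_subset_closedBall (by linarith)
  -- uniform continuity
  have huc := hcomp.uniformContinuousOn_of_continuous hcont.continuousOn
  rw [Metric.uniformContinuousOn_iff_le] at huc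
  obtain ⟨δ, hδ, huc⟩ := huc (lm / 8) (by positivity)
  have h2α : (1 : ℝ) ≤ 2 ^ α := Real.one_le_rpow (by norm_num) hα.le
  refine ⟨H / lm * 2 ^ α, min (1/2) (δ / 2), by positivity, by positivity, ?_, ?_, ?_⟩
  · intro x hx y hy
    refine (hlog x (hsub hx) y).trans ?_
    gcongr
    exact le_mul_of_one_le_right (by positivity) h2α
  · intro x hx y hy
    have := (convex_segment (𝕜 := ℝ) x y).norm_image_sub_le_of_norm_hasFDerivWithin_le
      (f := g) (f' := fun z => fderiv ℝ g z) (C := ‖fderiv ℝ g x‖ * Real.exp (H / lm * 2 ^ α * ‖x - y‖ ^ α))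
      (fun q hq => (hdiff q).hasFDerivAt.hasFDerivWithinAt)
      (fun q hq => by
        refine (hlog x (hsub hx) q).trans ?_
        have : ‖x - q‖ ≤ ‖x - y‖ := by
          have := norm_sub_le_of_mem_segment hq
          rwa [norm_sub_rev q x, norm_sub_rev y x] at this
        have h3 : H / lm ≤ H / lm * 2 ^ α := le_mul_of_one_le_right (by positivity) h2α
        gcongr) (right_mem_segment ℝ x y) (left_mem_segment ℝ x y)
    exact this
  · intro x hx y hy hxy
    have h1 : ‖x - y‖ ≤ 1 / 2 := hxy.trans (min_le_left _ _)
    have h2 : ‖x - y‖ ≤ δ / 2 := hxy.trans (min_le_right _ _)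
    have hz : ∀ z, ‖z - x‖ ≤ 2 * ‖x - y‖ → z ∈ closedBall (0 : F) (R + 1) := by
      intro z hz
      have h3 : ‖x‖ ≤ R := by simpa using hx
      have := norm_add_le (z - x) x
      simp only [sub_add_cancel] at this
      simp only [mem_closedBall, dist_zero_right]
      linarith
    apply single_lower g hg hconf x y (lm / 8) _ (by positivity)
    · have := hmin' x (hsub hx); linarith
    · intro z hzx
      have := huc z (hz z hzx) x (hsub hx) (by rw [dist_eq_norm]; linarith)
      rwa [dist_eq_norm] at this
    · have := (hconf x).1; positivity
    · intro z hzx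
      have h4 := hlog z (hz z hzx) x
      rw [Real.exp_neg, ← div_eq_mul_inv, div_le_iff₀ (Real.exp_pos _)]
      refine h4.trans ?_
      have h5 : H / lm * ‖z - x‖ ^ α ≤ H / lm * 2 ^ α * ‖x - y‖ ^ α := by
        rw [mul_assoc, ← Real.mul_rpow (by norm_num) (norm_nonneg _)]
        gcongr
      gcongr

set_option linter.unusedSectionVars false

/-- The metric estimates for the maps of the IFS that the argument relies on. -/
structure Geo {A F : Type*} [NormedAddCommGroup F] (φ : A → F → F) (lam : A → F → ℝ)
    (ρ R B α η : ℝ) : Prop where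
  ρ0 : 0 < ρ
  ρ1 : ρ < 1
  R0 : 0 < R
  B0 : 0 < B
  α0 : 0 < α
  η0 : 0 < η
  lip : ∀ a x y, ‖φ a x - φ a y‖ ≤ ρ * ‖x - y‖
  maps : ∀ a x, ‖x‖ ≤ R → ‖φ a x‖ ≤ R
  pos : ∀ a x, 0 < lam a x
  le : ∀ a x, lam a x ≤ ρ
  hol : ∀ a x y, ‖x‖ ≤ R → ‖y‖ ≤ R → lam a y ≤ lam a x * Real.exp (B * ‖x - y‖ ^ α)
  upper : ∀ a x y, ‖x‖ ≤ R → ‖y‖ ≤ R →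
    ‖φ a x - φ a y‖ ≤ lam a x * Real.exp (B * ‖x - y‖ ^ α) * ‖x - y‖
  lower : ∀ a x y, ‖x‖ ≤ R → ‖y‖ ≤ R → ‖x - y‖ ≤ η →
    lam a x * Real.exp (-(B * ‖x - y‖ ^ α)) * ‖x - y‖ ≤ ‖φ a x - φ a y‖

lemma exists_geo (d : ℕ) {A : Type*} [Fintype A]
    (φ : A → EuclideanSpace ℝ (Fin d) → EuclideanSpace ℝ (Fin d))
    (hΦ : IsSelfConformalIFS φ) :
    ∃ ρ R B α η : ℝ, Geo φ (fun a x => ‖fderiv ℝ (φ a) x‖) ρ R B α η := by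
  obtain ⟨hcard, hcontr, hC1, hconf, ⟨H, α, hH, hα, hh⟩, -⟩ := hΦ
  have hne : Nonempty A := by
    rw [← Fintype.card_pos_iff]; omega
  choose r hr using hcontr
  obtain ⟨a0, ha0⟩ := Finite.exists_max r
  set ρ := r a0 with hρ
  have hρ0 : 0 < ρ := (hr a0).1
  have hρ1 : ρ < 1 := (hr a0).2.1
  have hlip : ∀ a x y, ‖φ a x - φ a y‖ ≤ ρ * ‖x - y‖ := fun a x y =>
    ((hr a).2.2 x y).trans (mul_le_mul_of_nonneg_right (ha0 a) (norm_nonneg _))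
  obtain ⟨a1, ha1⟩ := Finite.exists_max (fun a => ‖φ a 0‖)
  set R := ‖φ a1 0‖ / (1 - ρ) + 1 with hRdef
  have h1ρ : 0 < 1 - ρ := by linarith
  have hR : 0 < R := by positivity
  choose B η hB hη h1 h2 h3 using fun a => single_est (φ a) (hC1 a) (hconf a) H α hH hα (hh a) R hR
  obtain ⟨b, hb⟩ := Finite.exists_max B
  obtain ⟨e, he⟩ := Finite.exists_min η
  refine ⟨ρ, R, B b, α, η e, hρ0, hρ1, hR, hB b, hα, hη e, hlip, ?_, ?_, ?_, ?_, ?_, ?_⟩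
  · intro a x hx
    have h4 := hlip a x 0
    have h5 := ha1 a
    have h6 : ‖φ a x‖ ≤ ‖φ a x - φ a 0‖ + ‖φ a 0‖ := by
      have := norm_add_le (φ a x - φ a 0) (φ a 0)
      simpa using this
    rw [sub_zero] at h4
    have h7 : ρ * ‖x‖ ≤ ρ * R := by gcongr
    have h8 : ‖φ a1 0‖ ≤ (1 - ρ) * R := by
      rw [hRdef, mul_add, mul_div_cancel₀ _ h1ρ.ne']; linarith
    linarith
  · intro a x; exact (hconf a x).1
  · intro a x
    have hl : LipschitzWith ⟨ρ, hρ0.le⟩ (φ a) := LipschitzWith.of_dist_le_mul fun x y => by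
      rw [dist_eq_norm, dist_eq_norm]; exact hlip a x y
    exact norm_fderiv_le_of_lipschitz ℝ hl
  · intro a x y hx hy
    refine (h1 a x (by simpa using hx) y (by simpa using hy)).trans ?_
    have := hb a
    gcongr
  · intro a x y hx hy
    refine (h2 a x (by simpa using hx) y (by simpa using hy)).trans ?_
    have := hb a
    gcongr
  · intro a x y hx hy hxy
    refine le_trans ?_ (h3 a x (by simpa using hx) y (by simpa using hy) (hxy.trans (he a)))
    have := hb a
    gcongr

/-- Multiplicative cocycle along a word. -/
def lamL {A F : Type*} [NormedAddCommGroup F] [NormedSpace ℝ F] (φ : A → F → F) (lam : A → F → ℝ) :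
    List A → F → ℝ
  | [], _ => 1
  | a :: l, x => lam a (listMap φ l x) * lamL φ lam l x

lemma listMap_append {A F : Type*} [NormedAddCommGroup F] [NormedSpace ℝ F] (φ : A → F → F)
    (l l' : List A) (x : F) : listMap φ (l ++ l') x = listMap φ l (listMap φ l' x) := by
  induction l with
  | nil => rfl
  | cons a l ih => simp only [List.cons_append, listMap, Function.comp_apply, ih]

lemma lamL_append {A F : Type*} [NormedAddCommGroup F] [NormedSpace ℝ F] (φ : A → F → F)
    (lam : A → F → ℝ) (l l' : List A) (x : F) :
    lamL φ lam (l ++ l') x = lamL φ lam l (listMap φ l' x) * lamL φ lam l' x := by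
  induction l with
  | nil => simp [lamL]
  | cons a l ih => simp only [List.cons_append, lamL, ih, listMap_append, mul_assoc]

namespace Geo

variable {A F : Type*} [NormedAddCommGroup F] [NormedSpace ℝ F] {φ : A → F → F} {lam : A → F → ℝ}
  {ρ R B α η : ℝ}

lemma lipL (h : Geo φ lam ρ R B α η) (l : List A) (x y : F) :
    ‖listMap φ l x - listMap φ l y‖ ≤ ρ ^ l.length * ‖x - y‖ := by
  induction l with
  | nil => simp [listMap]
  | cons a l ih =>
    simp only [listMap, Function.comp_apply, List.length_cons, pow_succ']
    refine (h.lip a _ _).trans ?_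
    rw [mul_assoc]
    exact mul_le_mul_of_nonneg_left ih h.ρ0.le

lemma mapsL (h : Geo φ lam ρ R B α η) (l : List A) (x : F) (hx : ‖x‖ ≤ R) :
    ‖listMap φ l x‖ ≤ R := by
  induction l with
  | nil => simpa [listMap] using hx
  | cons a l ih => exact h.maps a _ ih

lemma posL (h : Geo φ lam ρ R B α η) (l : List A) (x : F) : 0 < lamL φ lam l x := by
  induction l with
  | nil => simp [lamL]
  | cons a l ih => exact mul_pos (h.pos _ _) ih

lemma leL (h : Geo φ lam ρ R B α η) (l : List A) (x : F) : lamL φ lam l x ≤ ρ ^ l.length := by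
  induction l with
  | nil => simp [lamL]
  | cons a l ih =>
    simp only [lamL, List.length_cons, pow_succ']
    exact mul_le_mul (h.le _ _) ih (h.posL _ _).le h.ρ0.le

lemma powL (h : Geo φ lam ρ R B α η) (l : List A) (x y : F) :
    ‖listMap φ l x - listMap φ l y‖ ^ α ≤ (ρ ^ α) ^ l.length * ‖x - y‖ ^ α := by
  have h1 := h.lipL l x y
  have h2 : (ρ ^ α) ^ l.length * ‖x - y‖ ^ α = (ρ ^ l.length * ‖x - y‖) ^ α := by
    rw [Real.mul_rpow (pow_nonneg h.ρ0.le _) (norm_nonneg _), ← Real.rpow_natCast, ← Real.rpow_natCast,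
      ← Real.rpow_mul h.ρ0.le, ← Real.rpow_mul h.ρ0.le, mul_comm α]
  rw [h2]
  exact Real.rpow_le_rpow (norm_nonneg _) h1 h.α0.le

/-- partial sums of the distortion -/
def dsum (ρ B α : ℝ) (n : ℕ) : ℝ := B * ∑ j ∈ Finset.range n, (ρ ^ α) ^ j

lemma holS (h : Geo φ lam ρ R B α η) (l : List A) (x y : F) (hx : ‖x‖ ≤ R) (hy : ‖y‖ ≤ R) :
    lamL φ lam l y ≤ lamL φ lam l x * Real.exp (dsum ρ B α l.length * ‖x - y‖ ^ α) := by
  induction l with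
  | nil => simp [lamL, dsum]
  | cons a l ih =>
    have h1 := h.hol a _ _ (h.mapsL l x hx) (h.mapsL l y hy)
    have h2 := mul_le_mul_of_nonneg_left (h.powL l x y) h.B0.le
    have hp := h.pos a (listMap φ l x)
    have hp2 := h.posL l x
    have hp3 := h.posL l y
    simp only [lamL, List.length_cons, dsum, Finset.sum_range_succ] at ih ⊢
    calc _ ≤ (lam a (listMap φ l x) * Real.exp (B * ((ρ ^ α) ^ l.length * ‖x - y‖ ^ α))) *
          (lamL φ lam l x * Real.exp ((B * ∑ j ∈ Finset.range l.length, (ρ ^ α) ^ j) * ‖x - y‖ ^ α)) := by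
          refine mul_le_mul (h1.trans ?_) ih hp3.le (by positivity)
          gcongr
      _ = _ := by
        rw [mul_mul_mul_comm, ← Real.exp_add]; congr 2; ring

lemma upperS (h : Geo φ lam ρ R B α η) (l : List A) (x y : F) (hx : ‖x‖ ≤ R) (hy : ‖y‖ ≤ R) :
    ‖listMap φ l x - listMap φ l y‖ ≤
      lamL φ lam l x * Real.exp (dsum ρ B α l.length * ‖x - y‖ ^ α) * ‖x - y‖ := by
  induction l with
  | nil => simp [lamL, dsum, listMap]
  | cons a l ih =>
    have h1 := h.upper a _ _ (h.mapsL l x hx) (h.mapsL l y hy)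
    have h2 := mul_le_mul_of_nonneg_left (h.powL l x y) h.B0.le
    have hp := h.pos a (listMap φ l x)
    have hp2 := h.posL l x
    simp only [lamL, List.length_cons, dsum, Finset.sum_range_succ, listMap, Function.comp_apply] at ih ⊢
    calc _ ≤ (lam a (listMap φ l x) * Real.exp (B * ((ρ ^ α) ^ l.length * ‖x - y‖ ^ α))) *
          (lamL φ lam l x * Real.exp ((B * ∑ j ∈ Finset.range l.length, (ρ ^ α) ^ j) * ‖x - y‖ ^ α) * ‖x - y‖) := by
          refine h1.trans ?_
          refine mul_le_mul ?_ ih (norm_nonneg _) (by positivity)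
          gcongr
      _ = _ := by
        rw [← mul_assoc, mul_mul_mul_comm, ← Real.exp_add]; congr 3; ring

lemma lowerS (h : Geo φ lam ρ R B α η) (l : List A) (x y : F) (hx : ‖x‖ ≤ R) (hy : ‖y‖ ≤ R)
    (hxy : ‖x - y‖ ≤ η) :
    lamL φ lam l x * Real.exp (-(dsum ρ B α l.length * ‖x - y‖ ^ α)) * ‖x - y‖ ≤
      ‖listMap φ l x - listMap φ l y‖ := by
  induction l with
  | nil => simp [lamL, dsum, listMap]
  | cons a l ih =>
    have hc : ‖listMap φ l x - listMap φ l y‖ ≤ η := by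
      refine (h.lipL l x y).trans (le_trans ?_ hxy)
      exact mul_le_of_le_one_left (norm_nonneg _) (pow_le_one₀ h.ρ0.le h.ρ1.le)
    have h1 := h.lower a _ _ (h.mapsL l x hx) (h.mapsL l y hy) hc
    have h2 := mul_le_mul_of_nonneg_left (h.powL l x y) h.B0.le
    have hp := h.pos a (listMap φ l x)
    have hp2 := h.posL l x
    simp only [lamL, List.length_cons, dsum, Finset.sum_range_succ, listMap, Function.comp_apply] at ih ⊢
    calc _ = (lam a (listMap φ l x) * Real.exp (-(B * ((ρ ^ α) ^ l.length * ‖x - y‖ ^ α)))) *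
          (lamL φ lam l x * Real.exp (-((B * ∑ j ∈ Finset.range l.length, (ρ ^ α) ^ j) * ‖x - y‖ ^ α)) * ‖x - y‖) := by
          rw [← mul_assoc, mul_mul_mul_comm, ← Real.exp_add]; congr 3; ring
      _ ≤ _ := by
          refine le_trans ?_ h1
          refine mul_le_mul ?_ ih (by positivity) (by positivity)
          gcongr

lemma dsum_le (h : Geo φ lam ρ R B α η) (n : ℕ) : dsum ρ B α n ≤ B / (1 - ρ ^ α) := by
  have h1 : ρ ^ α < 1 := Real.rpow_lt_one h.ρ0.le h.ρ1 h.α0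
  have h0 : 0 ≤ ρ ^ α := Real.rpow_nonneg h.ρ0.le _
  rw [dsum, div_eq_mul_inv]
  refine mul_le_mul_of_nonneg_left ?_ h.B0.le
  rw [← tsum_geometric_of_lt_one h0 h1]
  exact (summable_geometric_of_lt_one h0 h1).sum_le_tsum _ (fun i _ => pow_nonneg h0 _)

/-- Uniform distortion bounds for all words. -/
lemma distort (h : Geo φ lam ρ R B α η) : ∃ M : ℝ, 1 ≤ M ∧
    (∀ l x y, ‖x‖ ≤ R → ‖y‖ ≤ R → lamL φ lam l y ≤ M * lamL φ lam l x) ∧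
    (∀ l x y, ‖x‖ ≤ R → ‖y‖ ≤ R →
      ‖listMap φ l x - listMap φ l y‖ ≤ M * lamL φ lam l x * ‖x - y‖) ∧
    (∀ l x y, ‖x‖ ≤ R → ‖y‖ ≤ R → ‖x - y‖ ≤ η →
      lamL φ lam l x * ‖x - y‖ ≤ M * ‖listMap φ l x - listMap φ l y‖) := by
  have h1 : ρ ^ α < 1 := Real.rpow_lt_one h.ρ0.le h.ρ1 h.α0
  have hC0 : 0 ≤ B / (1 - ρ ^ α) := div_nonneg h.B0.le (by linarith)
  have hR := h.R0
  set M := Real.exp (B / (1 - ρ ^ α) * (2 * R) ^ α) with hM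
  have key : ∀ l : List A, ∀ x y : F, ‖x‖ ≤ R → ‖y‖ ≤ R →
      Real.exp (dsum ρ B α l.length * ‖x - y‖ ^ α) ≤ M := by
    intro l x y hx hy
    have h2 := h.dsum_le l.length
    have h3 : ‖x - y‖ ≤ 2 * R := (norm_sub_le x y).trans (by linarith)
    have h4 := h.α0.le
    rw [hM]; gcongr
  refine ⟨M, Real.one_le_exp (by positivity), ?_, ?_, ?_⟩
  · intro l x y hx hy
    refine (h.holS l x y hx hy).trans ?_
    rw [mul_comm]
    exact mul_le_mul_of_nonneg_right (key l x y hx hy) (h.posL l x).le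
  · intro l x y hx hy
    refine (h.upperS l x y hx hy).trans ?_
    rw [mul_comm (lamL φ lam l x)]
    exact mul_le_mul_of_nonneg_right (mul_le_mul_of_nonneg_right (key l x y hx hy) (h.posL l x).le)
      (norm_nonneg _)
  · intro l x y hx hy hxy
    have h2 := h.lowerS l x y hx hy hxy
    rw [Real.exp_neg] at h2
    have h3 : lamL φ lam l x * ‖x - y‖ ≤
        Real.exp (dsum ρ B α l.length * ‖x - y‖ ^ α) * ‖listMap φ l x - listMap φ l y‖ := by
      refine le_trans (le_of_eq ?_) (mul_le_mul_of_nonneg_left h2 (Real.exp_pos _).le)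
      field_simp
    exact h3.trans (mul_le_mul_of_nonneg_right (key l x y hx hy) (norm_nonneg _))

end Geo

/-- Cylinder sets in the space of binary sequences. -/
def bcyl (n : ℕ) (t : ℕ → Bool) : Set (ℕ → Bool) := {t' | ∀ i < n, t' i = t i}

lemma bcyl_measure (β : Measure Bool) [IsProbabilityMeasure β] (n : ℕ) (t : ℕ → Bool) :
    Measure.infinitePi (fun _ : ℕ => β) (bcyl n t) = ∏ i ∈ Finset.range n, β {t i} := by
  have : bcyl n t = Set.pi (Finset.range n : Set ℕ) (fun i => {t i}) := by
    ext t'; simp [bcyl, Set.mem_pi]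
  rw [this, Measure.infinitePi_pi _ (fun i _ => measurableSet_singleton _)]

/-- Geometric data of a coding of a Cantor set with uniform constants. -/
structure Coding {F : Type*} [NormedAddCommGroup F] (π : (ℕ → Bool) → F)
    (ℓ : ℕ → (ℕ → Bool) → ℝ) (C c c' : ℝ) : Prop where
  zero : ∀ t, ℓ 0 t = 1
  pos : ∀ n t, 0 < ℓ n t
  upper : ∀ n t t', (∀ i < n, t' i = t i) → dist (π t') (π t) ≤ C * ℓ n t
  lower : ∀ n t t', (∀ i < n, t' i = t i) → t' n ≠ t n → c * ℓ n t ≤ dist (π t') (π t)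
  step1 : ∀ n t, c' * ℓ n t ≤ ℓ (n + 1) t
  step2 : ∀ n t, ℓ (n + 1) t ≤ 1 / 2 * ℓ n t

namespace Coding

variable {F : Type*} [NormedAddCommGroup F] {π : (ℕ → Bool) → F}
  {ℓ : ℕ → (ℕ → Bool) → ℝ} {C c c' : ℝ}

lemma iter (h : Coding π ℓ C c c') (n k : ℕ) (t : ℕ → Bool) :
    ℓ (n + k) t ≤ (1 / 2) ^ k * ℓ n t := by
  induction k with
  | zero => simp
  | succ k ih =>
    have := h.step2 (n + k) t
    rw [← add_assoc, pow_succ']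
    linarith

lemma iter' (h : Coding π ℓ C c c') (hc' : 0 < c') (n k : ℕ) (t : ℕ → Bool) :
    c' ^ k * ℓ n t ≤ ℓ (n + k) t := by
  induction k with
  | zero => simp
  | succ k ih =>
    have := h.step1 (n + k) t
    rw [← add_assoc, pow_succ', mul_assoc]
    exact (mul_le_mul_of_nonneg_left ih hc'.le).trans this

lemma anti (h : Coding π ℓ C c c') {n m : ℕ} (hnm : n ≤ m) (t : ℕ → Bool) : ℓ m t ≤ ℓ n t := by
  obtain ⟨k, rfl⟩ := Nat.exists_eq_add_of_le hnm
  refine (h.iter n k t).trans ?_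
  exact mul_le_of_le_one_left (h.pos _ _).le (pow_le_one₀ (by norm_num) (by norm_num))

lemma pre_subset (h : Coding π ℓ C c c') (t : ℕ → Bool) (s : ℝ) (j : ℕ)
    (hj : ∀ i < j, s < c * ℓ i t) : π ⁻¹' closedBall (π t) s ⊆ bcyl j t := by
  classical
  intro t' ht'
  by_contra hcon
  have hex : ∃ i, i < j ∧ t' i ≠ t i := by
    simpa [bcyl] using hcon
  obtain ⟨hi1, hi2⟩ := Nat.find_spec hex
  set i := Nat.find hex with hi
  have hag : ∀ k < i, t' k = t k := by
    intro k hk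
    by_contra hne
    exact Nat.find_min hex hk ⟨hk.trans hi1, hne⟩
  have h1 := h.lower i t t' hag hi2
  have h2 := hj i hi1
  have h3 : dist (π t') (π t) ≤ s := ht'
  linarith

lemma subset_pre (h : Coding π ℓ C c c') (t : ℕ → Bool) (s : ℝ) (n : ℕ)
    (hn : C * ℓ n t ≤ s) : bcyl n t ⊆ π ⁻¹' closedBall (π t) s := by
  intro t' ht'
  exact (h.upper n t t' ht').trans hn

lemma exists_level (h : Coding π ℓ C c c') (hC : 0 < C) (t : ℕ → Bool) (s : ℝ) (hs : 0 < s) :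
    ∃ n, C * ℓ n t ≤ s ∧ ∀ i < n, s < C * ℓ i t := by
  classical
  have hex : ∃ n, C * ℓ n t ≤ s := by
    obtain ⟨n, hn⟩ := exists_pow_lt_of_lt_one (div_pos hs hC) (by norm_num : (1 / 2 : ℝ) < 1)
    refine ⟨n, ?_⟩
    have h1 := h.iter 0 n t
    rw [h.zero, zero_add, mul_one] at h1
    rw [lt_div_iff₀ hC] at hn
    nlinarith
  exact ⟨Nat.find hex, Nat.find_spec hex, fun i hi => not_le.1 (Nat.find_min hex hi)⟩

end Coding

section meas

variable (β : Measure Bool) [IsProbabilityMeasure β] (κ : ℝ)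

lemma bcyl_low (hκ : 0 < κ) (hβ : ∀ b, ENNReal.ofReal κ ≤ β {b}) (n k : ℕ) (t : ℕ → Bool) :
    Measure.infinitePi (fun _ : ℕ => β) (bcyl n t) ≤
      ENNReal.ofReal (κ⁻¹ ^ k) * Measure.infinitePi (fun _ : ℕ => β) (bcyl (n + k) t) := by
  induction k with
  | zero => simp
  | succ k ih =>
    refine ih.trans ?_
    rw [← add_assoc, bcyl_measure, bcyl_measure, Finset.prod_range_succ, pow_succ,
      ENNReal.ofReal_mul (by positivity), mul_assoc]
    refine mul_le_mul_right ?_ _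
    have h1 : (1 : ENNReal) ≤ ENNReal.ofReal κ⁻¹ * β {t (n + k)} := by
      calc (1 : ENNReal) = ENNReal.ofReal κ⁻¹ * ENNReal.ofReal κ := by
            rw [← ENNReal.ofReal_mul (by positivity), inv_mul_cancel₀ hκ.ne', ENNReal.ofReal_one]
        _ ≤ _ := by gcongr; exact hβ _
    calc _ = (∏ i ∈ Finset.range (n + k), β {t i}) * 1 := by rw [mul_one]
      _ ≤ (∏ i ∈ Finset.range (n + k), β {t i}) * (ENNReal.ofReal κ⁻¹ * β {t (n + k)}) := by gcongr
      _ = _ := by ring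

lemma bcyl_up (hκ : κ < 1) (hβ : ∀ b, β {b} ≤ ENNReal.ofReal (1 - κ)) (n k : ℕ) (t : ℕ → Bool) :
    Measure.infinitePi (fun _ : ℕ => β) (bcyl (n + k) t) ≤
      ENNReal.ofReal ((1 - κ) ^ k) * Measure.infinitePi (fun _ : ℕ => β) (bcyl n t) := by
  induction k with
  | zero => simp
  | succ k ih =>
    have h1 : 0 ≤ 1 - κ := by linarith
    rw [← add_assoc, bcyl_measure, Finset.prod_range_succ, pow_succ', ENNReal.ofReal_mul h1, mul_assoc,
      mul_comm _ (β _), ← bcyl_measure]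
    gcongr
    exact hβ _

end meas

section main

variable {F : Type*} [NormedAddCommGroup F] [MeasurableSpace F] [BorelSpace F]

lemma coding_doubling (κ C c c' : ℝ) (hκ : 0 < κ) (hC : 0 < C) (hc : 0 < c) :
    ∃ C₁ : ℝ, 0 < C₁ ∧ ∀ (β : Measure Bool) [IsProbabilityMeasure β],
      (∀ b, ENNReal.ofReal κ ≤ β {b}) → ∀ (π : (ℕ → Bool) → F), Measurable π →
      ∀ ℓ, Coding π ℓ C c c' → ∀ t, ∀ s : ℝ, 0 < s →
        Measure.map π (Measure.infinitePi (fun _ : ℕ => β)) (closedBall (π t) (8 * s)) ≤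
          ENNReal.ofReal C₁ *
            Measure.map π (Measure.infinitePi (fun _ : ℕ => β)) (closedBall (π t) s) := by
  obtain ⟨k, hk⟩ := exists_pow_lt_of_lt_one (show 0 < c / (8 * C) by positivity)
    (by norm_num : (1 / 2 : ℝ) < 1)
  refine ⟨κ⁻¹ ^ (k + 1), by positivity, ?_⟩
  intro β _ hβ π hπ ℓ h t s hs
  rw [Measure.map_apply hπ measurableSet_closedBall, Measure.map_apply hπ measurableSet_closedBall]
  obtain ⟨n, hn1, hn2⟩ := h.exists_level hC t s hs
  have hlow := measure_mono (μ := Measure.infinitePi (fun _ : ℕ => β)) (h.subset_pre t s n hn1)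
  have hup : π ⁻¹' closedBall (π t) (8 * s) ⊆ bcyl (n - (k + 1)) t := by
    apply h.pre_subset
    intro i hi
    have h1 := hn2 (i + k) (by omega)
    have h2 := h.iter i k t
    have h3 := h.pos i t
    rw [lt_div_iff₀ (by positivity)] at hk
    have h4 : C * ℓ (i + k) t ≤ C * ((1 / 2) ^ k * ℓ i t) := by gcongr
    have h5 : (1 / 2) ^ k * (8 * C) * ℓ i t < c * ℓ i t := by gcongr
    linarith
  have hup' := measure_mono (μ := Measure.infinitePi (fun _ : ℕ => β)) hup
  refine hup'.trans ((bcyl_low β κ hκ hβ _ (k + 1) t).trans ?_)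
  refine mul_le_mul_right (le_trans (measure_mono ?_) hlow) _
  intro t' ht' i hi
  exact ht' i (by omega)

lemma coding_decay (κ C c c' : ℝ) (hκ : 0 < κ) (hκ1 : κ < 1) (hC : 0 < C) (hc : 0 < c)
    (hc' : 0 < c') (hc1 : c' < 1) :
    ∃ b α : ℝ, 0 < b ∧ 0 < α ∧ ∀ (β : Measure Bool) [IsProbabilityMeasure β],
      (∀ b, β {b} ≤ ENNReal.ofReal (1 - κ)) → ∀ (π : (ℕ → Bool) → F), Measurable π →
      ∀ ℓ, Coding π ℓ C c c' → ∀ t, ∀ r ε : ℝ, 0 < r → r ≤ 1 → 0 < ε → ε < b →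
        Measure.map π (Measure.infinitePi (fun _ : ℕ => β)) (closedBall (π t) (ε * r)) ≤
          ENNReal.ofReal ((ε / b) ^ α) *
            Measure.map π (Measure.infinitePi (fun _ : ℕ => β)) (closedBall (π t) r) := by
  set c2 := min 1 (c' / C) with hc2
  have hc20 : 0 < c2 := by positivity
  set b := c * c2 / 2 with hb
  have hb0 : 0 < b := by positivity
  have h1κ : 0 < 1 - κ := by linarith
  set α := Real.log (1 - κ) / Real.log c' with hα
  have hlog1 : Real.log (1 - κ) < 0 := Real.log_neg h1κ (by linarith)
  have hlog2 : Real.log c' < 0 := Real.log_neg hc' hc1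
  have hα0 : 0 < α := div_pos_of_neg_of_neg hlog1 hlog2
  have hcα : c' ^ α = 1 - κ := by
    rw [Real.rpow_def_of_pos hc', hα, mul_div_cancel₀ _ hlog2.ne, Real.exp_log h1κ]
  refine ⟨b, α, hb0, hα0, ?_⟩
  intro β _ hβ π hπ ℓ h t r ε hr hr1 hε hεb
  have hsmall : ε / b < 1 := (div_lt_one hb0).2 hεb
  rw [Measure.map_apply hπ measurableSet_closedBall, Measure.map_apply hπ measurableSet_closedBall]
  obtain ⟨n, hn1, hn2⟩ := h.exists_level hC t r hr
  have hlow := measure_mono (μ := Measure.infinitePi (fun _ : ℕ => β)) (h.subset_pre t r n hn1)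
  obtain ⟨i, hi1, hi2⟩ := exists_nat_pow_near_of_lt_one (show 0 < ε / b by positivity) hsmall.le hc' hc1
  have hln : c2 * r ≤ ℓ n t := by
    rcases Nat.eq_zero_or_pos n with rfl | hn
    · rw [h.zero]
      calc c2 * r ≤ 1 * 1 := by
            gcongr; exact min_le_left _ _
        _ = 1 := by norm_num
    · obtain ⟨n', rfl⟩ : ∃ n', n = n' + 1 := ⟨n - 1, by omega⟩
      have h1 := hn2 n' (by omega)
      have h2 := h.step1 n' t
      have h3 : c2 ≤ c' / C := min_le_right _ _
      calc c2 * r ≤ c' / C * r := by gcongr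
        _ ≤ c' / C * (C * ℓ n' t) := by gcongr
        _ = c' * ℓ n' t := by field_simp
        _ ≤ _ := h2
  have hup : π ⁻¹' closedBall (π t) (ε * r) ⊆ bcyl (n + (i + 1)) t := by
    apply h.pre_subset
    intro j hj
    have h1 : ℓ (n + i) t ≤ ℓ j t := h.anti (by omega) t
    have h2 := h.iter' hc' n i t
    rw [div_le_iff₀ hb0] at hi2
    have h3 : c' ^ i * (c2 * r) ≤ ℓ j t := by
      refine le_trans ?_ (h2.trans h1); gcongr
    have h4 : c * (c' ^ i * (c2 * r)) ≤ c * ℓ j t := by gcongr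
    have h5 : c * (c' ^ i * (c2 * r)) = 2 * (c' ^ i * b) * r := by rw [hb]; ring
    have h6 : 2 * ε * r ≤ 2 * (c' ^ i * b) * r := by
      have : 2 * ε ≤ 2 * (c' ^ i * b) := by linarith
      gcongr
    have : 0 < ε * r := by positivity
    linarith
  have hup' := measure_mono (μ := Measure.infinitePi (fun _ : ℕ => β)) hup
  refine hup'.trans ((bcyl_up β κ hκ1 hβ n (i + 1) t).trans ?_)
  refine mul_le_mul' (ENNReal.ofReal_le_ofReal ?_) hlow
  calc (1 - κ) ^ (i + 1) = (c' ^ (i + 1)) ^ α := by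
        rw [← hcα, ← Real.rpow_natCast, ← Real.rpow_natCast, ← Real.rpow_mul hc'.le,
          ← Real.rpow_mul hc'.le, mul_comm]
    _ ≤ _ := by gcongr

lemma coding_main [NormedSpace ℝ F] (κ C c c' : ℝ) (hκ : 0 < κ) (hκ1 : κ < 1) (hC : 0 < C) (hc : 0 < c)
    (hc' : 0 < c') (hc1 : c' < 1) :
    ∃ C₁ C₂ α : ℝ, 0 < C₁ ∧ 0 < C₂ ∧ 0 < α ∧ ∀ (β : Measure Bool) [IsProbabilityMeasure β],
      (∀ b, ENNReal.ofReal κ ≤ β {b}) → (∀ b, β {b} ≤ ENNReal.ofReal (1 - κ)) →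
      ∀ (π : (ℕ → Bool) → F), Measurable π → ∀ ℓ, Coding π ℓ C c c' →
      ∀ ν : Measure F, ν = Measure.map π (Measure.infinitePi (fun _ : ℕ => β)) →
      (∀ x ∈ msupport ν, ∀ r : ℝ, 0 < r →
        ν (closedBall x (2 * r)) ≤ ENNReal.ofReal C₁ * ν (closedBall x r)) ∧
      (∀ x ∈ msupport ν, ∀ (y : F) (r ε : ℝ), 0 < r → r ≤ 1 → 0 < ε →
        ν (closedBall y (ε * r) ∩ closedBall x r) ≤
          ENNReal.ofReal (C₂ * ε ^ α) * ν (closedBall x r)) := by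
  obtain ⟨D, hD0, hD⟩ := coding_doubling (F := F) κ C c c' hκ hC hc
  obtain ⟨b, α, hb, hα, hdec⟩ := coding_decay (F := F) κ C c c' hκ hκ1 hC hc hc' hc1
  have hm : 0 < max 1 D := by positivity
  refine ⟨D, (2 / b) ^ α * max 1 D, α, hD0, by positivity, hα, ?_⟩
  intro β _ hβ1 hβ2 π hπ ℓ h ν hν
  have hdoub : ∀ x ∈ msupport ν, ∀ r : ℝ, 0 < r →
        ν (closedBall x (2 * r)) ≤ ENNReal.ofReal D * ν (closedBall x r) := by
    intro x hx r hr
    have h1 := hx (r / 2) (by positivity)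
    obtain ⟨t, ht⟩ : ∃ t, π t ∈ ball x (r / 2) := by
      by_contra hcon
      push Not at hcon
      have : π ⁻¹' ball x (r / 2) = ∅ := by
        ext t; simp only [Set.mem_preimage, Set.mem_empty_iff_false, iff_false]; exact hcon t
      rw [hν, Measure.map_apply hπ measurableSet_ball, this] at h1
      simp at h1
    rw [mem_ball] at ht
    have h2 := hD β hβ1 π hπ ℓ h t (r / 2) (by positivity)
    rw [← hν] at h2
    refine (measure_mono ?_).trans (h2.trans (mul_le_mul_right (measure_mono ?_) _))
    · apply closedBall_subset_closedBall'
      rw [dist_comm]; linarith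
    · apply closedBall_subset_closedBall'
      linarith
  refine ⟨hdoub, ?_⟩
  intro x hx y r ε hr hr1 hε
  have he : (2 / b) ^ α * max 1 D * ε ^ α = (2 * ε / b) ^ α * max 1 D := by
    have : (2 * ε / b) ^ α = (2 / b) ^ α * ε ^ α := by
      rw [← Real.mul_rpow (by positivity) hε.le]; congr 1; ring
    rw [this]; ring
  rw [he, ENNReal.ofReal_mul (by positivity), mul_assoc]
  rcases le_or_gt b (2 * ε) with hbig | hsmall
  · have h1 : (1 : ℝ) ≤ (2 * ε / b) ^ α := Real.one_le_rpow ((one_le_div hb).2 hbig) hα.le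
    have h1' : (1 : ENNReal) ≤ ENNReal.ofReal ((2 * ε / b) ^ α) := by
      rw [← ENNReal.ofReal_one]; exact ENNReal.ofReal_le_ofReal h1
    have h2' : (1 : ENNReal) ≤ ENNReal.ofReal (max 1 D) := by
      rw [← ENNReal.ofReal_one]; exact ENNReal.ofReal_le_ofReal (le_max_left _ _)
    calc _ ≤ ν (closedBall x r) := measure_mono Set.inter_subset_right
      _ = 1 * (1 * ν (closedBall x r)) := by simp
      _ ≤ _ := mul_le_mul' h1' (mul_le_mul' h2' le_rfl)
  · by_cases hex : ∃ t, π t ∈ closedBall y (ε * r) ∩ closedBall x r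
    · obtain ⟨t, ht1, ht2⟩ := hex
      rw [mem_closedBall] at ht1 ht2
      have h1 := hdec β hβ2 π hπ ℓ h t r (2 * ε) hr hr1 (by positivity) hsmall
      rw [← hν] at h1
      have h2 := hdoub x hx r hr
      calc _ ≤ ν (closedBall (π t) (2 * ε * r)) := by
            refine measure_mono (Set.inter_subset_left.trans ?_)
            apply closedBall_subset_closedBall'
            rw [dist_comm]; linarith
        _ ≤ _ := h1
        _ ≤ _ := by
          refine mul_le_mul_right ?_ _
          calc ν (closedBall (π t) r) ≤ ν (closedBall x (2 * r)) := by
                refine measure_mono ?_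
                apply closedBall_subset_closedBall'
                linarith
            _ ≤ _ := h2
            _ ≤ _ := by
              refine mul_le_mul_left ?_ _
              exact ENNReal.ofReal_le_ofReal (le_max_right _ _)
    · push Not at hex
      have : π ⁻¹' (closedBall y (ε * r) ∩ closedBall x r) = ∅ := by
        ext t; simp only [Set.mem_preimage, Set.mem_empty_iff_false, iff_false]; exact hex t
      rw [hν, Measure.map_apply hπ (measurableSet_closedBall.inter measurableSet_closedBall), this]
      simp

end main

/-! ### Sequences, head and tail -/

/-- The head/tail structure of a Bernoulli-type measure. -/
def HT {X Z : Type*} [Fintype X] [MeasurableSpace Z] (Q : Measure Z) (h : Z → X) (T : Z → Z)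
    (w : X → ENNReal) : Prop :=
  ∀ G : X → Z → ENNReal, (∀ x, Measurable (G x)) →
    ∫⁻ z, G (h z) (T z) ∂Q = ∑ x, w x * ∫⁻ z, G x z ∂Q

/-- The shift. -/
def shiftS {X : Type*} (z : ℕ → X) : ℕ → X := fun n => z (n + 1)

/-- Prepending a letter. -/
def consS {X : Type*} (x : X) (z : ℕ → X) : ℕ → X := fun n => Nat.casesOn n x z

lemma measurable_shiftS {X : Type*} [MeasurableSpace X] : Measurable (shiftS : (ℕ → X) → ℕ → X) :=
  measurable_pi_lambda _ fun n => measurable_pi_apply (n + 1)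

lemma measurable_consS {X : Type*} [MeasurableSpace X] (x : X) : Measurable (consS x) := by
  refine measurable_pi_lambda _ fun n => ?_
  cases n with
  | zero => exact measurable_const
  | succ n => exact measurable_pi_apply n

lemma infinitePi_cons {X : Type*} [Fintype X] [MeasurableSpace X] [MeasurableSingletonClass X]
    (P : Measure X) [IsProbabilityMeasure P] :
    ∑ x, P {x} • Measure.map (consS x) (Measure.infinitePi (fun _ : ℕ => P)) =
      Measure.infinitePi (fun _ : ℕ => P) := by
  classical
  refine Measure.eq_infinitePi _ ?_
  intro s t ht
  obtain ⟨n, hn⟩ : ∃ n, s ⊆ Finset.range (n + 1) := by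
    obtain ⟨n, hn⟩ := s.exists_nat_subset_range
    exact ⟨n, hn.trans (Finset.range_mono (Nat.le_succ n))⟩
  set u : ℕ → Set X := fun i => if i ∈ s then t i else Set.univ with hu
  have hum : ∀ i, MeasurableSet (u i) := by
    intro i; simp only [hu]; split_ifs
    · exact ht i
    · exact MeasurableSet.univ
  have h1 : Set.pi (s : Set ℕ) t = Set.pi (Finset.range (n + 1) : Set ℕ) u := by
    ext z
    simp only [Set.mem_pi, Finset.mem_coe, hu]
    constructor
    · intro h i _
      split_ifs with his
      · exact h i his
      · trivial
    · intro h i his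
      have := h i (hn his)
      rwa [if_pos his] at this
  have h2 : ∏ i ∈ s, P (t i) = ∏ i ∈ Finset.range (n + 1), P (u i) := by
    rw [← Finset.prod_subset hn]
    · refine Finset.prod_congr rfl fun i hi => ?_
      simp [hu, hi]
    · intro i _ hi
      simp [hu, hi]
  rw [h1, h2, Finset.prod_range_succ']
  have hmeas : MeasurableSet (Set.pi (Finset.range (n + 1) : Set ℕ) u) :=
    MeasurableSet.pi (Finset.countable_toSet _) fun i _ => hum i
  rw [Measure.finsetSum_apply]
  simp only [Measure.smul_apply, smul_eq_mul]
  have h3 : ∀ x, Measure.map (consS x) (Measure.infinitePi (fun _ : ℕ => P))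
      (Set.pi (Finset.range (n + 1) : Set ℕ) u) =
      (u 0).indicator 1 x * ∏ i ∈ Finset.range n, P (u (i + 1)) := by
    intro x
    rw [Measure.map_apply (measurable_consS x) hmeas]
    have : consS x ⁻¹' (Set.pi (Finset.range (n + 1) : Set ℕ) u) =
        if x ∈ u 0 then Set.pi (Finset.range n : Set ℕ) (fun i => u (i + 1)) else ∅ := by
      ext z
      split_ifs with hx
      · simp only [Set.mem_preimage, Set.mem_pi, Finset.coe_range, Set.mem_Iio]
        constructor
        · intro h i hi
          exact h (i + 1) (by omega)
        · intro h i hi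
          cases i with
          | zero => exact hx
          | succ i => exact h i (by omega)
      · simp only [Set.mem_preimage, Set.mem_pi, Finset.coe_range, Set.mem_Iio,
          Set.mem_empty_iff_false, iff_false]
        intro h
        exact hx (h 0 (by omega))
    rw [this]
    split_ifs with hx
    · rw [Measure.infinitePi_pi _ (fun i _ => hum _)]
      simp [hx]
    · simp [hx]
  simp only [h3]
  rw [mul_comm _ (P (u 0)), show P (u 0) = ∑ x, P {x} * (u 0).indicator 1 x from ?_,
    Finset.sum_mul]
  · refine Finset.sum_congr rfl fun x _ => ?_
    ring
  · rw [← lintegral_indicator_one (hum 0), lintegral_fintype]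
    refine Finset.sum_congr rfl fun x _ => ?_
    rw [mul_comm]

lemma HT_infinitePi {X : Type*} [Fintype X] [MeasurableSpace X] [MeasurableSingletonClass X]
    (P : Measure X) [IsProbabilityMeasure P] :
    HT (Measure.infinitePi (fun _ : ℕ => P)) (fun z => z 0) shiftS (fun x => P {x}) := by
  intro G hG
  have hm : Measurable (fun z : ℕ → X => G (z 0) (shiftS z)) := by
    have : Measurable (fun q : X × (ℕ → X) => G q.1 q.2) := measurable_from_prod_countable_right hG
    exact this.comp ((measurable_pi_apply 0).prodMk measurable_shiftS)
  conv_lhs => rw [← infinitePi_cons P]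
  rw [lintegral_finsetSum_measure]
  refine Finset.sum_congr rfl fun x _ => ?_
  rw [lintegral_smul_measure, lintegral_map hm (measurable_consS x)]
  rfl

lemma HT_prod {X Y Z V : Type*} [Fintype X] [Fintype Y] [MeasurableSpace Z] [MeasurableSpace V]
    (Q : Measure Z) [IsProbabilityMeasure Q] (Q' : Measure V) [IsProbabilityMeasure Q']
    [MeasurableSpace X] [MeasurableSingletonClass X] [MeasurableSpace Y]
    [MeasurableSingletonClass Y]
    (h : Z → X) (T : Z → Z) (w : X → ENNReal)
    (h' : V → Y) (T' : V → V) (w' : Y → ENNReal) (mh : Measurable h) (mT : Measurable T)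
    (mh' : Measurable h') (mT' : Measurable T')
    (H : HT Q h T w) (H' : HT Q' h' T' w') :
    HT (Q.prod Q') (fun z => (h z.1, h' z.2)) (fun z => (T z.1, T' z.2))
      (fun x => w x.1 * w' x.2) := by
  intro G hG
  have hm : Measurable (fun z : Z × V => G (h z.1, h' z.2) (T z.1, T' z.2)) := by
    have : Measurable (fun q : (X × Y) × (Z × V) => G q.1 q.2) :=
      measurable_from_prod_countable_right hG
    have m2 : Measurable (fun z : Z × V => (((h z.1, h' z.2), (T z.1, T' z.2)) :
        (X × Y) × (Z × V))) := by fun_prop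
    exact this.comp m2
  rw [lintegral_prod _ hm.aemeasurable]
  have e1 : ∀ z, ∫⁻ v, G (h z, h' v) (T z, T' v) ∂Q' =
      ∑ y, w' y * ∫⁻ v, G (h z, y) (T z, v) ∂Q' := fun z =>
    H' (fun y v => G (h z, y) (T z, v)) fun y => (hG _).comp measurable_prodMk_left
  have mi : ∀ x y, Measurable fun z => ∫⁻ v, G (x, y) (z, v) ∂Q' := fun x y =>
    (hG (x, y)).lintegral_prod_right'
  have e2 := H (fun x z => ∑ y, w' y * ∫⁻ v, G (x, y) (z, v) ∂Q')
    (fun x => Finset.measurable_fun_sum _ fun y _ => (mi x y).const_mul _)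
  simp only [e1]
  rw [e2, Fintype.sum_prod_type]
  refine Finset.sum_congr rfl fun x _ => ?_
  rw [lintegral_finsetSum _ (fun y _ => (mi x y).const_mul _), Finset.mul_sum]
  refine Finset.sum_congr rfl fun y _ => ?_
  rw [lintegral_const_mul _ (mi x y), lintegral_prod _ (hG _).aemeasurable, mul_assoc]

section CodingMap

variable {X F : Type*} [NormedAddCommGroup F] [CompleteSpace F] (f : X → F → F)

/-- The coding map. -/
def codeMap (z : ℕ → X) : F := limUnder atTop (fun n => wordMap f n z 0)

variable {f} {ρ R : ℝ}

lemma wordMap_snoc (n : ℕ) (z : ℕ → X) (y : F) :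
    wordMap f (n + 1) z y = wordMap f n z (f (z n) y) := by
  induction n generalizing z with
  | zero => rfl
  | succ n ih =>
    change f (z 0) (wordMap f (n + 1) _ y) = f (z 0) (wordMap f n _ _)
    rw [ih]

lemma wordMap_lip (hρ : 0 ≤ ρ) (hf : ∀ a x y, ‖f a x - f a y‖ ≤ ρ * ‖x - y‖) (n : ℕ) (z : ℕ → X)
    (x y : F) : ‖wordMap f n z x - wordMap f n z y‖ ≤ ρ ^ n * ‖x - y‖ := by
  induction n generalizing z with
  | zero => simp [wordMap]
  | succ n ih =>
    have h1 := hf (z 0) (wordMap f n (fun k => z (k + 1)) x) (wordMap f n (fun k => z (k + 1)) y)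
    have h2 := ih (fun k => z (k + 1))
    change ‖f (z 0) _ - f (z 0) _‖ ≤ _
    calc _ ≤ _ := h1
      _ ≤ ρ * (ρ ^ n * ‖x - y‖) := by gcongr
      _ = _ := by ring

lemma wordMap_ball (hb : ∀ a x, ‖x‖ ≤ R → ‖f a x‖ ≤ R) (n : ℕ) (z : ℕ → X) (x : F)
    (hx : ‖x‖ ≤ R) : ‖wordMap f n z x‖ ≤ R := by
  induction n generalizing z with
  | zero => exact hx
  | succ n ih => exact hb _ _ (ih _)

lemma codeMap_tendsto0 (hρ : 0 ≤ ρ) (hρ1 : ρ < 1) (hR : 0 ≤ R)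
    (hf : ∀ a x y, ‖f a x - f a y‖ ≤ ρ * ‖x - y‖)
    (hb : ∀ a x, ‖x‖ ≤ R → ‖f a x‖ ≤ R) (z : ℕ → X) :
    Tendsto (fun n => wordMap f n z 0) atTop (𝓝 (codeMap f z)) := by
  refine CauchySeq.tendsto_limUnder ?_
  refine cauchySeq_of_le_geometric ρ R hρ1 fun n => ?_
  rw [wordMap_snoc, dist_eq_norm]
  refine (wordMap_lip hρ hf n z _ _).trans ?_
  rw [zero_sub, norm_neg, mul_comm]
  gcongr
  exact hb _ _ (by simpa using hR)

lemma codeMap_tendsto (hρ : 0 ≤ ρ) (hρ1 : ρ < 1) (hR : 0 ≤ R)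
    (hf : ∀ a x y, ‖f a x - f a y‖ ≤ ρ * ‖x - y‖)
    (hb : ∀ a x, ‖x‖ ≤ R → ‖f a x‖ ≤ R) (z : ℕ → X) (y : F) :
    Tendsto (fun n => wordMap f n z y) atTop (𝓝 (codeMap f z)) := by
  refine (codeMap_tendsto0 hρ hρ1 hR hf hb z).congr_dist ?_
  have h0 : Tendsto (fun n : ℕ => ρ ^ n * ‖0 - y‖) atTop (𝓝 0) := by
    have := (tendsto_pow_atTop_nhds_zero_of_lt_one hρ hρ1).mul_const ‖0 - y‖
    simpa using this
  refine squeeze_zero (fun n => dist_nonneg) (fun n => ?_) h0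
  rw [dist_eq_norm]
  exact wordMap_lip hρ hf n z 0 y

lemma codeMap_ball (hρ : 0 ≤ ρ) (hρ1 : ρ < 1) (hR : 0 ≤ R)
    (hf : ∀ a x y, ‖f a x - f a y‖ ≤ ρ * ‖x - y‖)
    (hb : ∀ a x, ‖x‖ ≤ R → ‖f a x‖ ≤ R) (z : ℕ → X) : ‖codeMap f z‖ ≤ R :=
  le_of_tendsto (codeMap_tendsto0 hρ hρ1 hR hf hb z).norm
    (Eventually.of_forall fun n => wordMap_ball hb n z 0 (by simpa using hR))

lemma codeMap_shift (hρ : 0 ≤ ρ) (hρ1 : ρ < 1) (hR : 0 ≤ R)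
    (hf : ∀ a x y, ‖f a x - f a y‖ ≤ ρ * ‖x - y‖)
    (hb : ∀ a x, ‖x‖ ≤ R → ‖f a x‖ ≤ R) (z : ℕ → X) :
    codeMap f z = f (z 0) (codeMap f (shiftS z)) := by
  have h1 := (tendsto_add_atTop_iff_nat 1).2 (codeMap_tendsto0 hρ hρ1 hR hf hb z)
  have hc : Continuous (f (z 0)) := by
    have : LipschitzWith (Real.toNNReal ρ) (f (z 0)) := by
      refine LipschitzWith.of_dist_le_mul fun x y => ?_
      rw [dist_eq_norm, dist_eq_norm, Real.coe_toNNReal _ hρ]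
      exact hf _ _ _
    exact this.continuous
  have h2 := (hc.tendsto _).comp (codeMap_tendsto0 hρ hρ1 hR hf hb (shiftS z))
  exact tendsto_nhds_unique h1 h2

lemma codeMap_shift_iter (hρ : 0 ≤ ρ) (hρ1 : ρ < 1) (hR : 0 ≤ R)
    (hf : ∀ a x y, ‖f a x - f a y‖ ≤ ρ * ‖x - y‖)
    (hb : ∀ a x, ‖x‖ ≤ R → ‖f a x‖ ≤ R) (n : ℕ) (z : ℕ → X) :
    codeMap f z = wordMap f n z (codeMap f (fun k => z (k + n))) := by
  induction n generalizing z with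
  | zero => rfl
  | succ n ih =>
    rw [codeMap_shift hρ hρ1 hR hf hb z, ih (shiftS z)]
    change _ = f (z 0) (wordMap f n _ _)
    rfl

lemma geo_cont (hρ : 0 ≤ ρ) (hf : ∀ a x y, ‖f a x - f a y‖ ≤ ρ * ‖x - y‖) (a : X) :
    Continuous (f a) := by
  have : LipschitzWith (Real.toNNReal ρ) (f a) := by
    refine LipschitzWith.of_dist_le_mul fun x y => ?_
    rw [dist_eq_norm, dist_eq_norm, Real.coe_toNNReal _ hρ]
    exact hf _ _ _
  exact this.continuous

variable [MeasurableSpace F] [BorelSpace F] [SecondCountableTopology F]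
  [Fintype X] [MeasurableSpace X] [MeasurableSingletonClass X]

/-- The itinerary of a point. -/
def itin {Z : Type*} (h : Z → X) (T : Z → Z) (z : Z) : ℕ → X := fun n => h (T^[n] z)

lemma measurable_itin {Z : Type*} [MeasurableSpace Z] {h : Z → X} {T : Z → Z}
    (mh : Measurable h) (mT : Measurable T) : Measurable (itin h T) :=
  measurable_pi_lambda _ fun n => mh.comp (mT.iterate n)

lemma measurable_wordMap (hc : ∀ a, Continuous (f a)) (n : ℕ) :
    Measurable (fun q : (ℕ → X) × F => wordMap f n q.1 q.2) := by
  induction n with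
  | zero => exact measurable_snd
  | succ n ih =>
    have h1 : Measurable (fun q : X × F => f q.1 q.2) :=
      measurable_from_prod_countable_right fun a => (hc a).measurable
    have h2 : Measurable (fun q : (ℕ → X) × F => (q.1 0, wordMap f n (shiftS q.1) q.2)) := by
      refine ((measurable_pi_apply 0).comp measurable_fst).prodMk ?_
      exact ih.comp ((measurable_shiftS.comp measurable_fst).prodMk measurable_snd)
    exact h1.comp h2

lemma measurable_codeMap (hρ : 0 ≤ ρ) (hρ1 : ρ < 1) (hR : 0 ≤ R)
    (hf : ∀ a x y, ‖f a x - f a y‖ ≤ ρ * ‖x - y‖)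
    (hb : ∀ a x, ‖x‖ ≤ R → ‖f a x‖ ≤ R) : Measurable (codeMap f) := by
  refine measurable_of_tendsto_metrizable (f := fun n z => wordMap f n z 0) (fun n => ?_)
    (tendsto_pi_nhds.2 fun z => codeMap_tendsto0 hρ hρ1 hR hf hb z)
  exact (measurable_wordMap (geo_cont hρ hf) n).comp measurable_prodMk_right

lemma law_step {Z : Type*} [MeasurableSpace Z] {Q : Measure Z} [IsProbabilityMeasure Q]
    {h : Z → X} {T : Z → Z} {w : X → ENNReal} (mh : Measurable h) (mT : Measurable T)
    (H : HT Q h T w) (hc : ∀ a, Continuous (f a)) (μ : Measure F) [IsProbabilityMeasure μ]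
    (hμ : ∀ G : F → ENNReal, Measurable G → ∑ x, w x * ∫⁻ y, G (f x y) ∂μ = ∫⁻ y, G y ∂μ)
    (n : ℕ) : ∀ G : F → ENNReal, Measurable G →
      ∫⁻ z, ∫⁻ y, G (wordMap f n (itin h T z) y) ∂μ ∂Q = ∫⁻ y, G y ∂μ := by
  induction n with
  | zero => intro G hG; simp [wordMap]
  | succ n ih =>
    intro G hG
    have hm : ∀ x, Measurable fun z => ∫⁻ y, G (f x (wordMap f n (itin h T z) y)) ∂μ := by
      intro x
      refine Measurable.lintegral_prod_right' (f := fun q : Z × F =>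
        G (f x (wordMap f n (itin h T q.1) q.2))) ?_
      have hw : Measurable (fun q : Z × F => wordMap f n (itin h T q.1) q.2) :=
        (measurable_wordMap hc n).comp
          (((measurable_itin mh mT).comp measurable_fst).prodMk measurable_snd)
      exact hG.comp ((hc x).measurable.comp hw)
    have := H (fun x z => ∫⁻ y, G (f x (wordMap f n (itin h T z) y)) ∂μ) hm
    have e : ∀ x, ∫⁻ z, ∫⁻ y, G (f x (wordMap f n (itin h T z) y)) ∂μ ∂Q =
        ∫⁻ y, G (f x y) ∂μ := fun x => ih (fun y => G (f x y)) (hG.comp (hc x).measurable)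
    simp only [e] at this
    rw [hμ G hG] at this
    exact this

lemma law_eq (hρ : 0 ≤ ρ) (hρ1 : ρ < 1) (hR : 0 ≤ R)
    (hf : ∀ a x y, ‖f a x - f a y‖ ≤ ρ * ‖x - y‖)
    (hb : ∀ a x, ‖x‖ ≤ R → ‖f a x‖ ≤ R)
    {Z : Type*} [MeasurableSpace Z] {Q : Measure Z} [IsProbabilityMeasure Q]
    {h : Z → X} {T : Z → Z} {w : X → ENNReal} (mh : Measurable h) (mT : Measurable T)
    (H : HT Q h T w) (μ : Measure F) [IsProbabilityMeasure μ]
    (hμ : ∀ G : F → ENNReal, Measurable G → ∑ x, w x * ∫⁻ y, G (f x y) ∂μ = ∫⁻ y, G y ∂μ) :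
    μ = Measure.map (fun z => codeMap f (itin h T z)) Q := by
  have hc := geo_cont hρ hf
  have mc : Measurable (fun z => codeMap f (itin h T z)) :=
    (measurable_codeMap hρ hρ1 hR hf hb).comp (measurable_itin mh mT)
  have hmm : ∀ n, Measurable (fun q : Z × F => wordMap f n (itin h T q.1) q.2) := fun n =>
    (measurable_wordMap hc n).comp
      (((measurable_itin mh mT).comp measurable_fst).prodMk measurable_snd)
  have : IsProbabilityMeasure (Measure.map (fun z => codeMap f (itin h T z)) Q) :=
    Measure.isProbabilityMeasure_map mc.aemeasurable
  refine ext_of_forall_lintegral_eq_of_IsFiniteMeasure fun g => ?_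
  rw [lintegral_map (by fun_prop) mc]
  have hg : Measurable (fun y => (g y : ENNReal)) := by fun_prop
  have h1 : ∀ n, ∫⁻ q, (g (wordMap f n (itin h T q.1) q.2) : ENNReal) ∂(Q.prod μ) =
      ∫⁻ y, g y ∂μ := by
    intro n
    have := hg.comp (hmm n)
    simp only [Function.comp_def] at this
    rw [lintegral_prod _ this.aemeasurable]
    exact law_step mh mT H hc μ hμ n _ hg
  have h2 : Tendsto (fun n => ∫⁻ q, (g (wordMap f n (itin h T q.1) q.2) : ENNReal) ∂(Q.prod μ))
      atTop (𝓝 (∫⁻ q, (g (codeMap f (itin h T q.1)) : ENNReal) ∂(Q.prod μ))) := by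
    refine tendsto_lintegral_of_dominated_convergence (fun _ => (nndist g 0 : ENNReal))
      (fun n => hg.comp (hmm n)) (fun n => ?_) ?_ ?_
    · refine Eventually.of_forall fun q => ?_
      have := BoundedContinuousFunction.NNReal.upper_bound g (wordMap f n (itin h T q.1) q.2)
      exact ENNReal.coe_le_coe.2 this
    · simp
    · refine Eventually.of_forall fun q => ?_
      have : Continuous (fun y => (g y : ENNReal)) := by fun_prop
      exact (this.tendsto _).comp (codeMap_tendsto hρ hρ1 hR hf hb _ _)
  simp only [h1] at h2
  have m3 : Measurable (fun q : Z × F => (g (codeMap f (itin h T q.1)) : ENNReal)) :=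
    hg.comp (mc.comp measurable_fst)
  rw [tendsto_nhds_unique tendsto_const_nhds h2, lintegral_prod _ m3.aemeasurable]
  simp

end CodingMap

/-! ### Iterated stationarity and pairs of words -/

lemma wordMap_eq_listMap {A F : Type*} [NormedAddCommGroup F] (φ : A → F → F) (k : ℕ)
    (z : ℕ → A) (y : F) :
    wordMap φ k z y = listMap φ (List.ofFn fun i : Fin k => z i) y := by
  induction k generalizing z with
  | zero => rfl
  | succ k ih =>
    rw [List.ofFn_succ]
    change φ (z 0) (wordMap φ k _ y) = φ (z 0) (listMap φ _ y)
    rw [ih]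
    rfl

lemma stat_iter {A F : Type*} [Fintype A] [NormedAddCommGroup F] [MeasurableSpace F]
    [BorelSpace F] (φ : A → F → F) (hc : ∀ a, Continuous (φ a)) (w : A → ENNReal) (μ : Measure F)
    (hμ : ∀ G : F → ENNReal, Measurable G → ∑ x, w x * ∫⁻ y, G (φ x y) ∂μ = ∫⁻ y, G y ∂μ)
    (n : ℕ) : ∀ G : F → ENNReal, Measurable G →
      ∑ v : Fin n → A, (∏ i, w (v i)) * ∫⁻ y, G (listMap φ (List.ofFn v) y) ∂μ
        = ∫⁻ y, G y ∂μ := by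
  induction n with
  | zero => intro G hG; simp [listMap]
  | succ n ih =>
    intro G hG
    rw [← hμ G hG, ← (Fin.consEquiv (fun _ => A)).sum_comp, Fintype.sum_prod_type]
    refine Finset.sum_congr rfl fun a _ => ?_
    rw [← ih (fun y => G (φ a y)) (hG.comp (hc a).measurable), Finset.mul_sum]
    refine Finset.sum_congr rfl fun v _ => ?_
    rw [Fin.prod_univ_succ, List.ofFn_succ]
    simp only [Fin.consEquiv, Equiv.coe_fn_mk, Fin.cons_zero, Fin.cons_succ, mul_assoc]
    rfl

lemma exists_law {X : Type*} [Fintype X] [MeasurableSpace X] [MeasurableSingletonClass X]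
    (w : X → ℝ) (hw : ∀ x, 0 ≤ w x) (hw1 : ∑ x, w x = 1) :
    ∃ P : Measure X, IsProbabilityMeasure P ∧ ∀ x, P {x} = ENNReal.ofReal (w x) := by
  have h1 : ∑ x, ENNReal.ofReal (w x) = 1 := by
    rw [← ENNReal.ofReal_sum_of_nonneg (fun x _ => hw x), hw1, ENNReal.ofReal_one]
  refine ⟨(PMF.ofFintype (fun x => ENNReal.ofReal (w x)) h1).toMeasure, inferInstance, fun x => ?_⟩
  rw [PMF.toMeasure_apply_singleton _ _ (measurableSet_singleton x)]
  rfl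

section Pairs

variable {A F : Type*} [Fintype A] [NormedAddCommGroup F] [NormedSpace ℝ F] [CompleteSpace F]
  [MeasurableSpace F]
  [BorelSpace F] [SecondCountableTopology F] {φ : A → F → F} {lam : A → F → ℝ}
  {ρ R B α η : ℝ}

lemma nonconst (h : Geo φ lam ρ R B α η) (p : A → ℝ) (hp : ∀ a, 0 < p a) (hp1 : ∑ a, p a = 1)
    (μ : Measure F) [IsProbabilityMeasure μ]
    (hμ : ∀ G : F → ENNReal, Measurable G →
      ∑ x, ENNReal.ofReal (p x) * ∫⁻ y, G (φ x y) ∂μ = ∫⁻ y, G y ∂μ)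
    (hna : ∀ x, μ {x} = 0) (n : ℕ) (g : Fin n → A) :
    ∃ z z' : ℕ → A, listMap φ (List.ofFn g) (codeMap φ z) ≠
      listMap φ (List.ofFn g) (codeMap φ z') := by
  by_contra hcon
  push Not at hcon
  have hA : Nonempty A := by
    by_contra hA
    rw [not_nonempty_iff] at hA
    simp at hp1
  let mA : MeasurableSpace A := ⊤
  have : MeasurableSingletonClass A := ⟨fun _ => trivial⟩
  obtain ⟨P, hP, hPx⟩ := exists_law p (fun a => (hp a).le) hp1
  have H := HT_infinitePi P
  simp only [hPx] at H
  have hc := geo_cont h.ρ0.le h.lip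
  have law := law_eq h.ρ0.le h.ρ1 h.R0.le h.lip h.maps (measurable_pi_apply 0) measurable_shiftS
    H μ hμ
  set z0 : ℕ → A := fun _ => Classical.arbitrary A
  set x := listMap φ (List.ofFn g) (codeMap φ z0) with hx
  have hcL : ∀ l : List A, Continuous (listMap φ l) := by
    intro l
    induction l with
    | nil => exact continuous_id
    | cons a l ih => exact (hc a).comp ih
  have mc : Measurable (fun z : ℕ → A => codeMap φ (itin (fun z : ℕ → A => z 0) shiftS z)) :=
    (measurable_codeMap h.ρ0.le h.ρ1 h.R0.le h.lip h.maps).comp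
      (measurable_itin (measurable_pi_apply 0) measurable_shiftS)
  have hG : Measurable (({x} : Set F).indicator (1 : F → ENNReal)) :=
    measurable_one.indicator (measurableSet_singleton x)
  have h1 := stat_iter φ hc _ μ hμ n _ hG
  rw [lintegral_indicator_one (measurableSet_singleton x), hna x, Finset.sum_eq_zero_iff] at h1
  have h2 := h1 g (Finset.mem_univ _)
  have h3 : ∫⁻ y, ({x} : Set F).indicator (1 : F → ENNReal) (listMap φ (List.ofFn g) y) ∂μ = 1 := by
    have mG : Measurable (fun y => ({x} : Set F).indicator (1 : F → ENNReal)
      (listMap φ (List.ofFn g) y)) := hG.comp (hcL _).measurable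
    rw [law, lintegral_map mG mc]
    have : ∀ z : ℕ → A, ({x} : Set F).indicator (1 : F → ENNReal) (listMap φ (List.ofFn g)
        (codeMap φ (itin (fun z : ℕ → A => z 0) shiftS z))) = 1 := by
      intro z
      rw [Set.indicator_of_mem]
      · rfl
      · exact hcon _ _
    simp only [this]
    simp
  rw [h3, mul_one, Finset.prod_eq_zero_iff] at h2
  obtain ⟨i, -, hi⟩ := h2
  rw [ENNReal.ofReal_eq_zero] at hi
  exact absurd (hp (g i)) (not_lt.2 hi)

lemma exists_pairs (h : Geo φ lam ρ R B α η) (p : A → ℝ) (hp : ∀ a, 0 < p a)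
    (hp1 : ∑ a, p a = 1)
    (μ : Measure F) [IsProbabilityMeasure μ]
    (hμ : ∀ G : F → ENNReal, Measurable G →
      ∑ x, ENNReal.ofReal (p x) * ∫⁻ y, G (φ x y) ∂μ = ∫⁻ y, G y ∂μ)
    (hna : ∀ x, μ {x} = 0) (N₀ : ℕ) :
    ∃ (n : ℕ) (D : ℝ) (s : (Fin n → A) → (Fin n → A)), N₀ ≤ n ∧ 0 < D ∧
      (∀ w, s (s (s w)) = s w) ∧ ∀ w k k', ‖k‖ ≤ R → ‖k'‖ ≤ R →
        D ≤ ‖listMap φ (List.ofFn w) k - listMap φ (List.ofFn (s w)) k'‖ ∧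
        ‖listMap φ (List.ofFn w) k - listMap φ (List.ofFn (s w)) k'‖ ≤ η := by
  classical
  have hA : Nonempty A := by
    by_contra hA
    rw [not_nonempty_iff] at hA
    simp at hp1
  have hR := h.R0
  have hρ := h.ρ0
  obtain ⟨m, hm⟩ := exists_pow_lt_of_lt_one (show 0 < η / (2 * R) from div_pos h.η0 (by linarith))
    h.ρ1
  rw [lt_div_iff₀ (by linarith)] at hm
  choose z z' hz using nonconst h p hp hp1 μ hμ hna m
  obtain ⟨g₀, hg₀⟩ := Finite.exists_min (fun g : Fin m → A =>
    ‖listMap φ (List.ofFn g) (codeMap φ (z g)) - listMap φ (List.ofFn g) (codeMap φ (z' g))‖)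
  set D₀ := ‖listMap φ (List.ofFn g₀) (codeMap φ (z g₀)) -
    listMap φ (List.ofFn g₀) (codeMap φ (z' g₀))‖ with hD₀
  have hD : 0 < D₀ := norm_pos_iff.2 (sub_ne_zero.2 (hz g₀))
  obtain ⟨k₀, hk₀⟩ := exists_pow_lt_of_lt_one (show 0 < D₀ / (8 * R) from
    div_pos hD (by linarith)) h.ρ1
  obtain ⟨k, hkN, hk⟩ : ∃ k, N₀ ≤ k ∧ ρ ^ k * R ≤ D₀ / 8 := by
    refine ⟨max N₀ k₀, le_max_left _ _, ?_⟩
    have : ρ ^ (max N₀ k₀) ≤ ρ ^ k₀ := pow_le_pow_of_le_one hρ.le h.ρ1.le (le_max_right _ _)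
    rw [lt_div_iff₀ (by linarith)] at hk₀
    nlinarith
  have hρm : ρ ^ m ≤ 1 := pow_le_one₀ hρ.le h.ρ1.le
  have hρk : 0 < ρ ^ k := pow_pos hρ k
  -- words of length `m + k` contract
  have hcon : ∀ (w : Fin (m + k) → A) (x : F), ‖x‖ ≤ R →
      ‖listMap φ (List.ofFn w) x - listMap φ (List.ofFn w) 0‖ ≤ D₀ / 8 := by
    intro w x hx
    have := h.lipL (List.ofFn w) x 0
    rw [List.length_ofFn, sub_zero, pow_add] at this
    have h2 : ρ ^ m * ρ ^ k * ‖x‖ ≤ 1 * ρ ^ k * R := by gcongr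
    linarith
  -- the truncated words
  set u : (ℕ → A) → (Fin m → A) → (Fin (m + k) → A) :=
    fun y g => Fin.append g (fun i => y i) with hu
  have hap : ∀ (g : Fin m → A) (b : Fin k → A) (x : F), listMap φ (List.ofFn (Fin.append g b)) x =
      listMap φ (List.ofFn g) (listMap φ (List.ofFn b) x) := by
    intro g b x
    rw [List.ofFn_fin_append, listMap_append]
  have hu1 : ∀ y g, ‖listMap φ (List.ofFn g) (codeMap φ y) -
      listMap φ (List.ofFn (u y g)) 0‖ ≤ D₀ / 8 := by
    intro y g
    rw [codeMap_shift_iter h.ρ0.le h.ρ1 h.R0.le h.lip h.maps k y, wordMap_eq_listMap, ← hap]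
    exact hcon _ _ (codeMap_ball h.ρ0.le h.ρ1 h.R0.le h.lip h.maps _)
  have hsep : ∀ g, 3 * D₀ / 4 ≤ ‖listMap φ (List.ofFn (u (z g) g)) 0 -
      listMap φ (List.ofFn (u (z' g) g)) 0‖ := by
    intro g
    have a1 := hu1 (z g) g
    have a2 := hu1 (z' g) g
    have a3 := hg₀ g
    have a4 := norm_sub_le_norm_sub_add_norm_sub (listMap φ (List.ofFn g) (codeMap φ (z g)))
      (listMap φ (List.ofFn (u (z g) g)) 0) (listMap φ (List.ofFn g) (codeMap φ (z' g)))
    have a5 := norm_sub_le_norm_sub_add_norm_sub (listMap φ (List.ofFn (u (z g) g)) 0)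
      (listMap φ (List.ofFn (u (z' g) g)) 0) (listMap φ (List.ofFn g) (codeMap φ (z' g)))
    rw [norm_sub_rev (listMap φ (List.ofFn (u (z' g) g)) 0)] at a5
    linarith
  set pre : (Fin (m + k) → A) → (Fin m → A) := fun w i => w (Fin.castAdd k i) with hpre
  have hpreu : ∀ y g, pre (u y g) = g := by
    intro y g
    funext i
    simp [hpre, hu]
  set s : (Fin (m + k) → A) → (Fin (m + k) → A) := fun w =>
    if 3 * D₀ / 8 ≤ ‖listMap φ (List.ofFn w) 0 - listMap φ (List.ofFn (u (z (pre w)) (pre w))) 0‖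
    then u (z (pre w)) (pre w) else u (z' (pre w)) (pre w) with hs
  have hsu : ∀ g, s (u (z g) g) = u (z' g) g := by
    intro g
    simp only [hs, hpreu]
    rw [if_neg]
    simp only [sub_self, norm_zero]
    linarith
  have hsv : ∀ g, s (u (z' g) g) = u (z g) g := by
    intro g
    simp only [hs, hpreu]
    rw [if_pos]
    rw [norm_sub_rev]
    linarith [hsep g]
  have hsor : ∀ w, s w = u (z (pre w)) (pre w) ∨ s w = u (z' (pre w)) (pre w) := by
    intro w
    simp only [hs]
    split_ifs <;> simp
  refine ⟨m + k, D₀ / 8, s, by omega, by linarith, ?_, ?_⟩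
  · intro w
    rcases hsor w with hw | hw
    · rw [hw, hsu, hsv]
    · rw [hw, hsv, hsu]
  · intro w x x' hx hx'
    constructor
    · have h0 : 3 * D₀ / 8 ≤ ‖listMap φ (List.ofFn w) 0 - listMap φ (List.ofFn (s w)) 0‖ := by
        by_cases hcase : 3 * D₀ / 8 ≤
          ‖listMap φ (List.ofFn w) 0 - listMap φ (List.ofFn (u (z (pre w)) (pre w))) 0‖
        · have : s w = u (z (pre w)) (pre w) := if_pos hcase
          rw [this]; exact hcase
        · have : s w = u (z' (pre w)) (pre w) := if_neg hcase
          rw [this]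
          have b1 := hsep (pre w)
          have b2 := norm_sub_le_norm_sub_add_norm_sub
            (listMap φ (List.ofFn (u (z (pre w)) (pre w))) 0) (listMap φ (List.ofFn w) 0)
            (listMap φ (List.ofFn (u (z' (pre w)) (pre w))) 0)
          rw [norm_sub_rev _ (listMap φ (List.ofFn w) 0)] at b2
          push Not at hcase
          linarith
      have c1 := hcon w x hx
      have c2 := hcon (s w) x' hx'
      have c3 := norm_sub_le_norm_sub_add_norm_sub (listMap φ (List.ofFn w) 0)
        (listMap φ (List.ofFn w) x) (listMap φ (List.ofFn (s w)) 0)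
      have c4 := norm_sub_le_norm_sub_add_norm_sub (listMap φ (List.ofFn w) x)
        (listMap φ (List.ofFn (s w)) x') (listMap φ (List.ofFn (s w)) 0)
      rw [norm_sub_rev] at c1
      linarith
    · have hw : w = Fin.append (pre w) (fun i => w (Fin.natAdd m i)) := by
        funext i
        refine Fin.addCases (fun i => ?_) (fun i => ?_) i <;> simp [hpre]
      obtain ⟨b, hb⟩ : ∃ b : Fin k → A, s w = Fin.append (pre w) b := by
        rcases hsor w with hw | hw
        · exact ⟨_, hw⟩
        · exact ⟨_, hw⟩
      have hwx : listMap φ (List.ofFn w) x = listMap φ (List.ofFn (pre w))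
          (listMap φ (List.ofFn fun i => w (Fin.natAdd m i)) x) := by
        rw [← hap, ← hw]
      rw [hb, hwx, hap]
      refine (h.lipL _ _ _).trans ?_
      rw [List.length_ofFn]
      have e1 := h.mapsL (List.ofFn fun i => w (Fin.natAdd m i)) x hx
      have e2 := h.mapsL (List.ofFn b) x' hx'
      have e3 := (norm_sub_le (listMap φ (List.ofFn fun i => w (Fin.natAdd m i)) x)
        (listMap φ (List.ofFn b) x')).trans (add_le_add e1 e2)
      have hρm' : 0 < ρ ^ m := pow_pos hρ m
      nlinarith

end Pairs

/-! ### Weights -/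

section Weights

lemma alg_one (κ x : ℝ) (hx : x = 1 - 2 * κ) (hx0 : x ≠ 0) (h1 : 1 - κ ≠ 0) :
    1 / (1 - κ) * 1 - κ / x * 1 + κ ^ 2 / ((1 - κ) * x) * 1 = 1 := by
  field_simp
  rw [hx]
  ring

lemma alg_two (κ x P S T : ℝ) (hx : x = 1 - 2 * κ) (hx0 : x ≠ 0) (h1 : 1 - κ ≠ 0) :
    P = (1 - κ) * (1 / (1 - κ) * P - κ / x * S + κ ^ 2 / ((1 - κ) * x) * T) +
      κ * (1 / (1 - κ) * S - κ / x * T + κ ^ 2 / ((1 - κ) * x) * S) := by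
  field_simp
  rw [hx]
  ring

variable {W : Type*} [Fintype W] [DecidableEq W]

/-- Push-forward of a weight by a map. -/
def pushW (s : W → W) (f : W → ℝ) (w : W) : ℝ := ∑ w', if s w' = w then f w' else 0

lemma pushW_pair (s : W → W) (f g : W → ℝ) : ∑ w, g w * pushW s f w = ∑ w, g (s w) * f w := by
  simp only [pushW, Finset.mul_sum]
  rw [Finset.sum_comm]
  refine Finset.sum_congr rfl fun w' _ => ?_
  simp

lemma pushW_sum (s : W → W) (f : W → ℝ) : ∑ w, pushW s f w = ∑ w, f w := by
  simpa using pushW_pair s f (fun _ => 1)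

lemma pushW_comp (s t : W → W) (f : W → ℝ) : pushW t (pushW s f) = pushW (fun w => t (s w)) f := by
  funext w
  have := pushW_pair s f (fun w' => if t w' = w then 1 else 0)
  simpa [pushW] using this

lemma exists_weights (P : W → ℝ) (hP : ∀ w, 0 < P w) (hP1 : ∑ w, P w = 1) (s : W → W)
    (hs : ∀ w, s (s (s w)) = s w) :
    ∃ (κ : ℝ) (q : W → ℝ), 0 < κ ∧ κ ≤ 1 / 4 ∧ (∀ w, 0 ≤ q w) ∧ ∑ w, q w = 1 ∧
      ∀ I : W → ENNReal, ∑ w, ENNReal.ofReal (q w) *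
        (ENNReal.ofReal (1 - κ) * I w + ENNReal.ofReal κ * I (s w)) =
        ∑ w, ENNReal.ofReal (P w) * I w := by
  have hW : Nonempty W := by
    by_contra hW
    rw [not_nonempty_iff] at hW
    simp at hP1
  obtain ⟨w₀, hw₀⟩ := Finite.exists_min P
  obtain ⟨κ, hκ, hκ4, hκP⟩ : ∃ κ : ℝ, 0 < κ ∧ κ ≤ 1 / 4 ∧ 2 * κ ≤ P w₀ :=
    ⟨min (1 / 4) (P w₀ / 2), lt_min (by norm_num) (half_pos (hP w₀)), min_le_left _ _,
      by linarith [min_le_right (1 / 4) (P w₀ / 2)]⟩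
  have h1 : 0 < 1 - κ := by linarith
  have h2 : 0 < 1 - 2 * κ := by linarith
  have h1' := h1.ne'
  have h2' := h2.ne'
  set q : W → ℝ := fun w => 1 / (1 - κ) * P w - κ / (1 - 2 * κ) * pushW s P w +
    κ ^ 2 / ((1 - κ) * (1 - 2 * κ)) * pushW s (pushW s P) w with hq
  have hpos : ∀ f : W → ℝ, (∀ w, 0 ≤ f w) → ∀ w, 0 ≤ pushW s f w := by
    intro f hf w
    refine Finset.sum_nonneg fun w' _ => ?_
    split_ifs
    · exact hf _
    · exact le_rfl
  have p1 := hpos P (fun w => (hP w).le)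
  have p2 := hpos _ p1
  have hq0 : ∀ w, 0 ≤ q w := by
    intro w
    have a1 : pushW s P w ≤ 1 := by
      rw [← hP1, ← pushW_sum s P]
      exact Finset.single_le_sum (f := fun w => pushW s P w) (fun w _ => p1 w) (Finset.mem_univ w)
    have a2 : κ / (1 - 2 * κ) ≤ 2 * κ := by
      rw [div_le_iff₀ h2]; nlinarith
    have a3 : 1 ≤ 1 / (1 - κ) := by
      rw [le_div_iff₀ h1]; linarith
    have a4 : 0 ≤ κ / (1 - 2 * κ) := by positivity
    have a5 : 0 ≤ κ ^ 2 / ((1 - κ) * (1 - 2 * κ)) * pushW s (pushW s P) w :=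
      mul_nonneg (by positivity) (p2 w)
    have a6 := hw₀ w
    have a7 := hP w
    have a8 : κ / (1 - 2 * κ) * pushW s P w ≤ 2 * κ * 1 := by
      have := p1 w
      gcongr
    have a9 : P w ≤ 1 / (1 - κ) * P w := le_mul_of_one_le_left a7.le a3
    simp only [hq]
    linarith
  have hq1 : ∑ w, q w = 1 := by
    simp only [hq, Finset.sum_add_distrib, Finset.sum_sub_distrib, ← Finset.mul_sum, pushW_sum, hP1]
    exact alg_one κ _ rfl h2' h1'
  have hqP : ∀ w, P w = (1 - κ) * q w + κ * pushW s q w := by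
    intro w
    have e3 : pushW s (pushW s (pushW s P)) w = pushW s P w := by
      rw [pushW_comp, pushW_comp]
      simp only [hs]
    have e1 : pushW s q w = 1 / (1 - κ) * pushW s P w - κ / (1 - 2 * κ) * pushW s (pushW s P) w +
        κ ^ 2 / ((1 - κ) * (1 - 2 * κ)) * pushW s (pushW s (pushW s P)) w := by
      conv_lhs => rw [pushW]
      conv_rhs => rw [pushW, show pushW s (pushW s P) w = ∑ w', if s w' = w then pushW s P w' else 0
        from rfl, show pushW s (pushW s (pushW s P)) w =
          ∑ w', if s w' = w then pushW s (pushW s P) w' else 0 from rfl]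
      rw [Finset.mul_sum, Finset.mul_sum, Finset.mul_sum, ← Finset.sum_sub_distrib,
        ← Finset.sum_add_distrib]
      refine Finset.sum_congr rfl fun w' _ => ?_
      split_ifs
      · rfl
      · simp
    rw [e1, e3]
    exact alg_two κ _ _ _ _ rfl h2' h1'
  refine ⟨κ, q, hκ, hκ4, hq0, hq1, fun I => ?_⟩
  have hE : ∀ w, ENNReal.ofReal (P w) = ENNReal.ofReal (1 - κ) * ENNReal.ofReal (q w) +
      ENNReal.ofReal κ * ∑ w', if s w' = w then ENNReal.ofReal (q w') else 0 := by
    intro w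
    rw [hqP w, ENNReal.ofReal_add (mul_nonneg h1.le (hq0 w)) (mul_nonneg hκ.le (hpos q hq0 w)),
      ENNReal.ofReal_mul h1.le, ENNReal.ofReal_mul hκ.le, pushW, ENNReal.ofReal_sum_of_nonneg]
    · congr 2
      refine Finset.sum_congr rfl fun w' _ => ?_
      split_ifs <;> simp
    · intro w' _
      split_ifs
      · exact hq0 _
      · exact le_rfl
  simp only [hE, add_mul, mul_add, Finset.sum_add_distrib]
  congr 1
  · refine Finset.sum_congr rfl fun w _ => by ring
  · simp only [mul_assoc, ← Finset.mul_sum, Finset.sum_mul]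
    rw [Finset.sum_comm]
    rw [Finset.mul_sum]
    refine Finset.sum_congr rfl fun w' _ => ?_
    simp only [ite_mul, zero_mul, Finset.sum_ite_eq, Finset.mem_univ, if_true]
    ring

end Weights

/-! ### Assembling -/

section Final

variable {A X F : Type*} [NormedAddCommGroup F] [NormedSpace ℝ F] [CompleteSpace F]
  {φ : A → F → F} {lam : A → F → ℝ} {ρ R B α η : ℝ}

/-- Concatenation of the first `n` words of a sequence of words. -/
def catW : ℕ → (ℕ → List A) → List A
  | 0, _ => []
  | n + 1, z => catW n z ++ z n

lemma catW_congr (n : ℕ) (z z' : ℕ → List A) (h : ∀ i < n, z i = z' i) : catW n z = catW n z' := by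
  induction n with
  | zero => rfl
  | succ n ih =>
    rw [catW, catW, ih fun i hi => h i (by omega), h n (by omega)]

lemma wordMap_catW (wd : X → List A) (n : ℕ) (y : ℕ → X) (x : F) :
    wordMap (fun a => listMap φ (wd a)) n y x = listMap φ (catW n fun i => wd (y i)) x := by
  induction n generalizing x with
  | zero => rfl
  | succ n ih => rw [wordMap_snoc, ih, catW, listMap_append]

lemma coding_of_words (h : Geo φ lam ρ R B α η) (M : ℝ) (hM : 1 ≤ M)
    (hM1 : ∀ l x y, ‖x‖ ≤ R → ‖y‖ ≤ R → lamL φ lam l y ≤ M * lamL φ lam l x)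
    (hM2 : ∀ l x y, ‖x‖ ≤ R → ‖y‖ ≤ R →
      ‖listMap φ l x - listMap φ l y‖ ≤ M * lamL φ lam l x * ‖x - y‖)
    (hM3 : ∀ l x y, ‖x‖ ≤ R → ‖y‖ ≤ R → ‖x - y‖ ≤ η →
      lamL φ lam l x * ‖x - y‖ ≤ M * ‖listMap φ l x - listMap φ l y‖)
    (wd : X × Bool → List A) (n : ℕ) (hlen : ∀ x, (wd x).length = n) (hn1 : n ≠ 0)
    (hn : M * ρ ^ n ≤ 1 / 2) (δ D : ℝ) (hδ : ∀ x, δ ≤ lamL φ lam (wd x) 0)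
    (hδ0 : 0 < δ)
    (hD0 : 0 < D) (hD : ∀ c b b', b ≠ b' → ∀ k k', ‖k‖ ≤ R → ‖k'‖ ≤ R →
      D ≤ ‖listMap φ (wd (c, b)) k - listMap φ (wd (c, b')) k'‖ ∧
      ‖listMap φ (wd (c, b)) k - listMap φ (wd (c, b')) k'‖ ≤ η) (ω : ℕ → X) :
    Coding (fun t => codeMap (fun a => listMap φ (wd a)) (fun i => (ω i, t i)))
      (fun k t => lamL φ lam (catW k fun i => wd (ω i, t i)) 0)
      (2 * M ^ 2 * R) (D / M ^ 2) (δ / M) := by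
  have hR := h.R0
  have hM0 : 0 < M := by linarith
  have h0 : ‖(0 : F)‖ ≤ R := by simpa using hR.le
  have hρn0 : 0 ≤ ρ ^ n := pow_nonneg h.ρ0.le n
  have hρn1 : ρ ^ n < 1 := pow_lt_one₀ h.ρ0.le h.ρ1 hn1
  have hf : ∀ a x y, ‖listMap φ (wd a) x - listMap φ (wd a) y‖ ≤ ρ ^ n * ‖x - y‖ := by
    intro a x y
    have := h.lipL (wd a) x y
    rwa [hlen] at this
  have hb : ∀ a x, ‖x‖ ≤ R → ‖listMap φ (wd a) x‖ ≤ R := fun a x hx => h.mapsL (wd a) x hx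
  have hball := codeMap_ball hρn0 hρn1 hR.le hf hb
  have hcut : ∀ k y, codeMap (fun a => listMap φ (wd a)) y = listMap φ (catW k fun i => wd (y i))
      (codeMap (fun a => listMap φ (wd a)) (fun i => y (i + k))) := by
    intro k y
    rw [codeMap_shift_iter hρn0 hρn1 hR.le hf hb k y, wordMap_catW]
  have hcong : ∀ k (t t' : ℕ → Bool), (∀ i < k, t' i = t i) →
      (catW k fun i => wd (ω i, t' i)) = catW k fun i => wd (ω i, t i) := by
    intro k t t' htt
    exact catW_congr _ _ _ fun i hi => by rw [htt i hi]
  refine ⟨fun t => rfl, fun k t => h.posL _ _, ?_, ?_, ?_, ?_⟩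
  · intro k t t' htt
    rw [dist_eq_norm]
    rw [hcut k fun i => (ω i, t' i), hcut k fun i => (ω i, t i)]
    rw [hcong k t t' htt]
    set l := catW k fun i => wd (ω i, t i)
    set a := codeMap (fun a => listMap φ (wd a)) (fun i => (ω (i + k), t (i + k)))
    set a' := codeMap (fun a => listMap φ (wd a)) (fun i => (ω (i + k), t' (i + k)))
    have ha : ‖a‖ ≤ R := hball _
    have ha' : ‖a'‖ ≤ R := hball _
    have e1 := hM2 l a' a ha' ha
    have e2 := hM1 l 0 a' h0 ha'
    have e3 : ‖a' - a‖ ≤ 2 * R := (norm_sub_le _ _).trans (by linarith)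
    have e4 := h.posL l 0
    have e5 := h.posL l a'
    calc _ ≤ _ := e1
      _ ≤ M * (M * lamL φ lam l 0) * (2 * R) := by gcongr
      _ = _ := by ring
  · intro k t t' htt hne
    rw [dist_eq_norm]
    rw [hcut k fun i => (ω i, t' i), hcut k fun i => (ω i, t i)]
    rw [hcong k t t' htt]
    set l := catW k fun i => wd (ω i, t i)
    set a := codeMap (fun a => listMap φ (wd a)) (fun i => (ω (i + k), t (i + k))) with hadef
    set a' := codeMap (fun a => listMap φ (wd a)) (fun i => (ω (i + k), t' (i + k))) with hadef'
    have ha : ‖a‖ ≤ R := hball _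
    have ha' : ‖a'‖ ≤ R := hball _
    have e0 : D ≤ ‖a' - a‖ ∧ ‖a' - a‖ ≤ η := by
      rw [hadef, hadef', codeMap_shift hρn0 hρn1 hR.le hf hb (fun i => (ω (i + k), t (i + k))),
        codeMap_shift hρn0 hρn1 hR.le hf hb (fun i => (ω (i + k), t' (i + k)))]
      simp only [zero_add]
      exact hD _ _ _ hne _ _ (hball _) (hball _)
    have e1 := hM3 l a' a ha' ha e0.2
    have e2 := hM1 l a' 0 ha' h0
    have e5 := h.posL l a'
    rw [div_mul_eq_mul_div, div_le_iff₀ (by positivity)]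
    calc D * lamL φ lam l 0 ≤ ‖a' - a‖ * (M * lamL φ lam l a') := by
          have := h.posL l (0 : F)
          gcongr
          exact e0.1
      _ = M * (lamL φ lam l a' * ‖a' - a‖) := by ring
      _ ≤ M * (M * ‖listMap φ l a' - listMap φ l a‖) := by gcongr
      _ = _ := by ring
  · intro k t
    simp only [catW, lamL_append]
    set l := catW k fun i => wd (ω i, t i)
    have e1 := hM1 l (listMap φ (wd (ω k, t k)) 0) 0 (h.mapsL _ _ h0) h0
    have e2 := hδ (ω k, t k)
    have e3 := h.posL l (listMap φ (wd (ω k, t k)) 0)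
    have e4 := h.posL l (0 : F)
    rw [div_mul_eq_mul_div, div_le_iff₀ hM0]
    calc δ * lamL φ lam l 0 ≤ lamL φ lam (wd (ω k, t k)) 0 *
          (M * lamL φ lam l (listMap φ (wd (ω k, t k)) 0)) := by gcongr; exact (h.posL _ _).le
      _ = _ := by ring
  · intro k t
    simp only [catW, lamL_append]
    set l := catW k fun i => wd (ω i, t i)
    have e1 := hM1 l 0 (listMap φ (wd (ω k, t k)) 0) h0 (h.mapsL _ _ h0)
    have e2 := h.leL (wd (ω k, t k)) 0
    rw [hlen] at e2
    have e3 := h.posL l (listMap φ (wd (ω k, t k)) 0)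
    have e4 := h.posL l (0 : F)
    calc _ ≤ (M * lamL φ lam l 0) * ρ ^ n := by
          gcongr
          exact (h.posL _ _).le
      _ = (M * ρ ^ n) * lamL φ lam l 0 := by ring
      _ ≤ _ := by gcongr

end Final

lemma shiftS_iterate {X : Type*} (n : ℕ) (z : ℕ → X) : shiftS^[n] z 0 = z n := by
  have : ∀ k, shiftS^[n] z k = z (k + n) := by
    induction n generalizing z with
    | zero => intro k; rfl
    | succ n ih =>
      intro k
      rw [Function.iterate_succ, Function.comp, ih]
      rfl
  rw [this, zero_add]

/-- Theorem 1 (self-conformal disintegration). -/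
theorem self_conformal_disintegration
    (d : ℕ) {A : Type*} [Fintype A]
    (φ : A → EuclideanSpace ℝ (Fin d) → EuclideanSpace ℝ (Fin d))
    (hΦ : IsSelfConformalIFS φ)
    (p : A → ℝ) (hp : ∀ a, 0 < p a) (hp1 : ∑ a, p a = 1)
    (μ : Measure (EuclideanSpace ℝ (Fin d))) [IsProbabilityMeasure μ]
    (hstat : μ = ∑ a, ENNReal.ofReal (p a) • Measure.map (φ a) μ)
    (hna : ∀ x, μ {x} = 0) :
    ∃ (Ω : Type) (_ : MeasurableSpace Ω) (ℙ : Measure Ω) (_ : IsProbabilityMeasure ℙ)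
      (μω : Ω → Measure (EuclideanSpace ℝ (Fin d))),
      (∀ ω, IsProbabilityMeasure (μω ω)) ∧
      (∀ S : Set (EuclideanSpace ℝ (Fin d)), MeasurableSet S →
        Measurable fun ω => μω ω S) ∧
      (∀ S : Set (EuclideanSpace ℝ (Fin d)), MeasurableSet S →
        μ S = ∫⁻ ω, μω ω S ∂ℙ) ∧
      ∃ C₁ C₂ α : ℝ, 0 < C₁ ∧ 0 < C₂ ∧ 0 < α ∧
        (∀ ω, ∀ x ∈ msupport (μω ω), ∀ r : ℝ, 0 < r →
          μω ω (Metric.closedBall x (2 * r)) ≤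
            ENNReal.ofReal C₁ * μω ω (Metric.closedBall x r)) ∧
        (∀ ω, ∀ x ∈ msupport (μω ω), ∀ (y : EuclideanSpace ℝ (Fin d)) (r ε : ℝ),
          0 < r → r ≤ 1 → 0 < ε →
          μω ω (Metric.closedBall y (ε * r) ∩ Metric.closedBall x r) ≤
            ENNReal.ofReal (C₂ * ε ^ α) * μω ω (Metric.closedBall x r)) := by
  classical
  obtain ⟨ρ, R, B, α₀, η, h⟩ := exists_geo d φ hΦ
  set lam : A → EuclideanSpace ℝ (Fin d) → ℝ := fun a x => ‖fderiv ℝ (φ a) x‖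
  have hρ := h.ρ0
  have hR := h.R0
  have hc := geo_cont h.ρ0.le h.lip
  have hμ : ∀ G : EuclideanSpace ℝ (Fin d) → ENNReal, Measurable G →
      ∑ x, ENNReal.ofReal (p x) * ∫⁻ y, G (φ x y) ∂μ = ∫⁻ y, G y ∂μ := by
    intro G hG
    have := congrArg (fun m => ∫⁻ y, G y ∂m) hstat
    simp only [lintegral_finsetSum_measure, lintegral_smul_measure] at this
    rw [this]
    refine Finset.sum_congr rfl fun a _ => ?_
    rw [lintegral_map hG (hc a).measurable]
    rfl
  obtain ⟨M, hM, hM1, hM2, hM3⟩ := h.distort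
  have hM0 : 0 < M := by linarith
  obtain ⟨n₀, hn₀⟩ := exists_pow_lt_of_lt_one (show 0 < 1 / (2 * M) by positivity) h.ρ1
  obtain ⟨n, D, s, hn, hD, hsss, hpair⟩ := exists_pairs h p hp hp1 μ hμ hna (n₀ + 1)
  have hMn : M * ρ ^ n ≤ 1 / 2 := by
    have : ρ ^ n ≤ ρ ^ n₀ := pow_le_pow_of_le_one hρ.le h.ρ1.le (by omega)
    rw [lt_div_iff₀ (by positivity)] at hn₀
    nlinarith
  set P : (Fin n → A) → ℝ := fun w => ∏ i, p (w i) with hP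
  have hP0 : ∀ w, 0 < P w := fun w => Finset.prod_pos fun i _ => hp _
  have hP1 : ∑ w, P w = 1 := by
    have := Finset.prod_univ_sum (fun _ : Fin n => (Finset.univ : Finset A)) (fun _ a => p a)
    rw [Fintype.piFinset_univ] at this
    simp only [hP]
    rw [← this]
    simp [hp1]
  obtain ⟨κ, q, hκ, hκ4, hq0, hq1, hqI⟩ := exists_weights P hP0 hP1 s hsss
  -- the alphabet
  set N := Fintype.card (Fin n → A)
  set e : (Fin n → A) ≃ Fin N := Fintype.equivFin _
  obtain ⟨Pc, hPc, hPcx⟩ := exists_law (fun c : Fin N => q (e.symm c)) (fun c => hq0 _)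
    (by rw [← hq1]; exact e.symm.sum_comp q)
  obtain ⟨β, hβ, hβx⟩ := exists_law (fun b : Bool => if b then κ else 1 - κ)
    (fun b => by cases b <;> simp <;> linarith) (by simp)
  set wd : Fin N × Bool → List A := fun x =>
    List.ofFn (if x.2 then s (e.symm x.1) else e.symm x.1) with hwd
  have hlen : ∀ x, (wd x).length = n := fun x => List.length_ofFn
  set f : Fin N × Bool → EuclideanSpace ℝ (Fin d) → EuclideanSpace ℝ (Fin d) :=
    fun x => listMap φ (wd x) with hf
  have hn1 : n ≠ 0 := by omega
  have hρn0 : 0 ≤ ρ ^ n := pow_nonneg h.ρ0.le n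
  have hρn1 : ρ ^ n < 1 := pow_lt_one₀ h.ρ0.le h.ρ1 hn1
  have hlip : ∀ a x y, ‖f a x - f a y‖ ≤ ρ ^ n * ‖x - y‖ := by
    intro a x y
    have := h.lipL (wd a) x y
    rwa [hlen] at this
  have hb : ∀ a x, ‖x‖ ≤ R → ‖f a x‖ ≤ R := fun a x hx => h.mapsL (wd a) x hx
  -- lower bound for the derivatives
  obtain ⟨δ, hδ0, hδ1, hδ⟩ : ∃ δ : ℝ, 0 < δ ∧ δ < 1 ∧ ∀ x, δ ≤ lamL φ lam (wd x) 0 := by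
    have hA : Nonempty (Fin N × Bool) := by
      by_contra hA
      rw [not_nonempty_iff] at hA
      have hW : Nonempty (Fin n → A) := by
        by_contra hW
        rw [not_nonempty_iff] at hW
        simp at hP1
      exact hA.false (e hW.some, true)
    obtain ⟨x₀, hx₀⟩ := Finite.exists_min fun x => lamL φ lam (wd x) 0
    refine ⟨min (1 / 2) (lamL φ lam (wd x₀) 0), lt_min (by norm_num) (h.posL _ _),
      (min_le_left _ _).trans_lt (by norm_num), fun x => (min_le_right _ _).trans (hx₀ x)⟩
  have hDb : ∀ c b b', b ≠ b' → ∀ k k', ‖k‖ ≤ R → ‖k'‖ ≤ R →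
      D ≤ ‖listMap φ (wd (c, b)) k - listMap φ (wd (c, b')) k'‖ ∧
      ‖listMap φ (wd (c, b)) k - listMap φ (wd (c, b')) k'‖ ≤ η := by
    intro c b b' hbb k k' hk hk'
    cases b <;> cases b'
    · exact absurd rfl hbb
    · simpa [hwd] using hpair (e.symm c) k k' hk hk'
    · rw [norm_sub_rev]
      simpa [hwd] using hpair (e.symm c) k' k hk' hk
    · exact absurd rfl hbb
  -- stationarity with respect to the new alphabet
  have hst : ∀ G : EuclideanSpace ℝ (Fin d) → ENNReal, Measurable G →
      ∑ x : Fin N × Bool, (Pc {x.1} * β {x.2}) * ∫⁻ y, G (f x y) ∂μ = ∫⁻ y, G y ∂μ := by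
    intro G hG
    rw [← stat_iter φ hc _ μ hμ n G hG]
    have e1 := hqI fun w => ∫⁻ y, G (listMap φ (List.ofFn w) y) ∂μ
    have e2 : ∀ w : Fin n → A, ∏ i, ENNReal.ofReal (p (w i)) = ENNReal.ofReal (P w) := by
      intro w
      rw [← ENNReal.ofReal_prod_of_nonneg fun i _ => (hp _).le]
    simp only [e2]
    rw [← e1, ← e.symm.sum_comp, Fintype.sum_prod_type]
    refine Finset.sum_congr rfl fun c _ => ?_
    simp only [Fintype.sum_bool, hPcx, hβx, hf, hwd, if_true, Bool.false_eq_true, if_false]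
    ring
  set Q := Measure.infinitePi fun _ : ℕ => Pc
  set L := Measure.infinitePi fun _ : ℕ => β
  set π : (ℕ → Fin N) × (ℕ → Bool) → EuclideanSpace ℝ (Fin d) :=
    fun z => codeMap f (fun i => (z.1 i, z.2 i)) with hπ
  have hit : ∀ z : (ℕ → Fin N) × (ℕ → Bool),
      itin (fun z : (ℕ → Fin N) × (ℕ → Bool) => (z.1 0, z.2 0))
        (fun z => (shiftS z.1, shiftS z.2)) z = fun i => (z.1 i, z.2 i) := by
    intro z
    funext i
    have : (fun z : (ℕ → Fin N) × (ℕ → Bool) => (shiftS z.1, shiftS z.2))^[i] z =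
        (shiftS^[i] z.1, shiftS^[i] z.2) := by
      induction i generalizing z with
      | zero => rfl
      | succ i ih => rw [Function.iterate_succ, Function.comp, ih]; rfl
    simp only [itin, this, shiftS_iterate]
  have mz : Measurable (fun z : (ℕ → Fin N) × (ℕ → Bool) => fun i => (z.1 i, z.2 i)) := by
    refine measurable_pi_lambda _ fun i => ?_
    exact ((measurable_pi_apply i).comp measurable_fst).prodMk
      ((measurable_pi_apply i).comp measurable_snd)
  have mπ : Measurable π := (measurable_codeMap hρn0 hρn1 hR.le hlip hb).comp mz
  have law : μ = Measure.map π (Q.prod L) := by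
    have m1 : Measurable (fun z : ℕ → Fin N => z 0) := measurable_pi_apply 0
    have m2 : Measurable (fun z : ℕ → Bool => z 0) := measurable_pi_apply 0
    have H := HT_prod Q L (fun z => z 0) shiftS _ (fun z => z 0) shiftS _ m1
      measurable_shiftS m2 measurable_shiftS (HT_infinitePi Pc) (HT_infinitePi β)
    have := law_eq hρn0 hρn1 hR.le hlip hb
      ((m1.comp measurable_fst).prodMk (m2.comp measurable_snd))
      ((measurable_shiftS.comp measurable_fst).prodMk (measurable_shiftS.comp measurable_snd))
      H μ hst
    rw [this]
    congr 1
    funext z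
    exact congrArg (codeMap f) (hit z)
  have mπω : ∀ ω, Measurable fun t => π (ω, t) := fun ω => mπ.comp measurable_prodMk_left
  refine ⟨ℕ → Fin N, inferInstance, Q, inferInstance, fun ω => Measure.map (fun t => π (ω, t)) L,
    fun ω => Measure.isProbabilityMeasure_map (mπω ω).aemeasurable, ?_, ?_, ?_⟩
  · intro S hS
    have : ∀ ω, Measure.map (fun t => π (ω, t)) L S = L (Prod.mk ω ⁻¹' (π ⁻¹' S)) := fun ω =>
      Measure.map_apply (mπω ω) hS
    simp only [this]
    exact measurable_measure_prodMk_left (mπ hS)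
  · intro S hS
    have : ∀ ω, Measure.map (fun t => π (ω, t)) L S = L (Prod.mk ω ⁻¹' (π ⁻¹' S)) := fun ω =>
      Measure.map_apply (mπω ω) hS
    simp only [this]
    rw [law, Measure.map_apply mπ hS, Measure.prod_apply (mπ hS)]
  · obtain ⟨C₁, C₂, α, h1, h2, h3, H⟩ := coding_main (F := EuclideanSpace ℝ (Fin d)) κ
      (2 * M ^ 2 * R) (D / M ^ 2) (δ / M) hκ (by linarith) (by positivity) (by positivity)
      (by positivity) (by rw [div_lt_one hM0]; linarith)
    have H' := fun ω => H β (fun b => by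
        rw [hβx]; apply ENNReal.ofReal_le_ofReal; cases b <;> simp <;> linarith)
      (fun b => by
        rw [hβx]; apply ENNReal.ofReal_le_ofReal; cases b <;> simp <;> linarith)
      (fun t => π (ω, t)) (mπω ω) _
      (coding_of_words h M hM hM1 hM2 hM3 wd n hlen hn1 hMn δ D hδ hδ0 hD hDb ω) _ rfl
    exact ⟨C₁, C₂, α, h1, h2, h3, fun ω => (H' ω).1, fun ω => (H' ω).2⟩
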